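/- (Asymptotic normality under one-step PGD-Gauss.) Fix K ≥ 2 and an arm k, and consider a sequence of experiments indexed by n: covariate matrices X⁽ⁿ⁾ ∈ ℝ^{n×d_n} whose rows all have unit Euclidean norm, potential outcome vectors Y⁽ⁿ⁾(k) ∈ ℝⁿ, and step sizes η_n > 0 with η_n ‖X⁽ⁿ⁾X⁽ⁿ⁾ᵀ − I_n‖_op → 0. Let Σ_{η_n} be the one-step PGD-Gauss solution, let T⁽ⁿ⁾ ~ N(0, Σ_{η_n}), D_i = g(T_i), τ_k = (1/n)Σ_i Y_i(k), τ̂_k = (K/n)Σ_i 1{D_i=k}Y_i(k), and define Ỹ(k) = f_k(I_n)^{−1/2} f_k(Σ_{η_n})^{1/2} Y(k) (here f_k is applied entrywise and f_k(I_n) = ((K−1)/K²) I_n). Assume: (1) max_{1≤i≤n} Ỹ_i(k)²/n → 0; (2) n·Var(τ̂_k) = ((K−1)/n)‖Ỹ(k)‖² converges to a positive limit σ²; (3) there is M > 0 with ‖Y⁽ⁿ⁾(k)‖² ≤ nM for all n. Then √n (τ̂_k − τ_k) converges in distribution to N(0, σ²). -/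

import Mathlib

open MeasureTheory ProbabilityTheory Matrix Real Filter
open scoped BigOperators ENNReal NNReal Topology

noncomputable section

/-- The spectral (operator) norm of a square real matrix. -/
def opNorm {m : ℕ} (A : Matrix (Fin m) (Fin m) ℝ) : ℝ :=
  ‖(Matrix.toEuclideanCLM (𝕜 := ℝ) A : EuclideanSpace ℝ (Fin m) →L[ℝ] EuclideanSpace ℝ (Fin m))‖

/-- The standard normal CDF `Φ`. -/
def stdGaussianCDF (x : ℝ) : ℝ := (gaussianReal 0 1 (Set.Iic x)).toReal

/-- The set of values `t` mapped by the Gaussianization map `g` to arm `k`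
(arms are `0`-indexed: `k : Fin K` represents arm `k+1`; `q m = Φ⁻¹(m/K)`). -/
def armSet (q : ℕ → ℝ) (K : ℕ) (k : Fin K) : Set ℝ :=
  if k.val = 0 then Set.Iic (q 1)
  else if k.val = K - 1 then Set.Ioi (q (K - 1))
  else Set.Ioc (q k.val) (q (k.val + 1))

/-- The function `r_{i,j}(ρ)`. -/
def rfun (q : ℕ → ℝ) (i j : ℕ) (ρ : ℝ) : ℝ :=
  ∫ r in (0 : ℝ)..ρ,
    (2 * π * Real.sqrt (1 - r ^ 2))⁻¹ *
      Real.exp (-((q i ^ 2 + q j ^ 2 - 2 * r * q i * q j) / (2 * (1 - r ^ 2))))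

/-- The function `f_k` (arms `0`-indexed: `k : Fin K` represents arm `k+1`). -/
def fkfun (q : ℕ → ℝ) (K : ℕ) (k : Fin K) (ρ : ℝ) : ℝ :=
  if k.val = 0 then rfun q 1 1 ρ
  else if k.val = K - 1 then rfun q (K - 1) (K - 1) ρ
  else rfun q k.val k.val ρ + rfun q (k.val + 1) (k.val + 1) ρ
    - 2 * rfun q k.val (k.val + 1) ρ

/-- The one-step PGD-Gauss solution `Σ_η = D⁻¹ U² D⁻¹`, where
`U = I − η c (XXᵀ − I)` with `c = f_k′(0)` and `D` is the diagonal matrix whose `i`-th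
diagonal entry is the Euclidean norm of the `i`-th row of `U`. -/
def pgd {n d : ℕ} (X : Matrix (Fin n) (Fin d) ℝ) (η c : ℝ) : Matrix (Fin n) (Fin n) ℝ :=
  let U : Matrix (Fin n) (Fin n) ℝ := 1 - (η * c) • (X * Xᵀ - 1)
  Matrix.of fun i j =>
    (U * U) i j / (Real.sqrt (∑ l, U i l ^ 2) * Real.sqrt (∑ l, U j l ^ 2))

/-!
By Plackett's identity `f_k ρ` is the covariance of the arm-`k` indicators of a standard Gaussian
pair with correlation `ρ`. Near `0` one has `f_k s = c s + O(s²)` with `c = f_k′(0)`, and the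
quadratic remainder is summable along the rows of a correlation matrix close to `I`; by the Schur
test `‖f_k(Σ) - f_k(1) I‖ → 0` in operator norm as soon as `‖Σ - I‖ → 0`.

Write `T = B z` with `z` i.i.d. standard normal and `B = D⁻¹ U`, so that `B → I`. Applied to the
Gram matrices of the rows of `B` and `I`, this continuity makes the difference of the weighted
indicator sums at `T` and at `z` vanish in mean square; applied to `Σ = B Bᵀ`, it gives
`‖Ỹ - Y‖² = o(n)`. The claim thus reduces to a central limit theorem for weighted i.i.d. sums with
asymptotically negligible weights, which follows by comparing characteristic functions factor by
factor with Gaussian ones.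
-/

section MatrixNorm

open scoped Matrix.Norms.L2Operator

variable {ι κ : Type*} [Fintype ι] [Fintype κ] [DecidableEq κ]

theorem l2_opNorm_transpose [DecidableEq ι] (A : Matrix ι κ ℝ) : ‖Aᵀ‖ = ‖A‖ := by
  rw [← conjTranspose_eq_transpose_of_trivial, l2_opNorm_conjTranspose]

theorem sum_sq_mulVec_le (A : Matrix ι κ ℝ) (x : κ → ℝ) :
    ∑ i, (A *ᵥ x) i ^ 2 ≤ ‖A‖ ^ 2 * ∑ j, x j ^ 2 := by
  have h := l2_opNorm_mulVec A (WithLp.toLp 2 x)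
  have h' := pow_le_pow_left₀ (norm_nonneg _) h 2
  rwa [mul_pow, EuclideanSpace.real_norm_sq_eq, EuclideanSpace.real_norm_sq_eq] at h'

theorem l2_opNorm_le_of_sum_sq_mulVec_le {A : Matrix ι κ ℝ} {C : ℝ} (hC : 0 ≤ C)
    (h : ∀ x : κ → ℝ, ∑ i, (A *ᵥ x) i ^ 2 ≤ C ^ 2 * ∑ j, x j ^ 2) : ‖A‖ ≤ C := by
  rw [l2_opNorm_def]
  refine ContinuousLinearMap.opNorm_le_bound _ hC fun x => ?_
  refine le_of_sq_le_sq ?_ (by positivity)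
  rw [mul_pow, EuclideanSpace.real_norm_sq_eq, EuclideanSpace.real_norm_sq_eq]
  exact h x.ofLp

theorem sum_col_sq_le_l2_opNorm_sq (A : Matrix ι κ ℝ) (j : κ) :
    ∑ i, A i j ^ 2 ≤ ‖A‖ ^ 2 := by
  simpa [Pi.single_apply] using sum_sq_mulVec_le A (Pi.single j 1)

theorem sum_row_sq_le_l2_opNorm_sq (A : Matrix ι κ ℝ) (i : ι) :
    ∑ j, A i j ^ 2 ≤ ‖A‖ ^ 2 := by
  classical
  simpa only [l2_opNorm_transpose, transpose_apply] using sum_col_sq_le_l2_opNorm_sq Aᵀ i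

theorem abs_apply_le_l2_opNorm (A : Matrix ι κ ℝ) (i : ι) (j : κ) : |A i j| ≤ ‖A‖ :=
  abs_le_of_sq_le_sq ((Finset.single_le_sum (f := fun i => A i j ^ 2) (fun _ _ => sq_nonneg _)
    (Finset.mem_univ i)).trans (sum_col_sq_le_l2_opNorm_sq A j)) (norm_nonneg _)

theorem abs_dotProduct_mulVec_le (A : Matrix ι κ ℝ) (x : ι → ℝ) (y : κ → ℝ) :
    |x ⬝ᵥ A *ᵥ y| ≤ ‖A‖ * (‖WithLp.toLp 2 x‖ * ‖WithLp.toLp 2 y‖) := by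
  have h := (abs_real_inner_le_norm (WithLp.toLp 2 x) (WithLp.toLp 2 (A *ᵥ y))).trans
    (mul_le_mul_of_nonneg_left (l2_opNorm_mulVec A (WithLp.toLp 2 y)) (norm_nonneg _))
  rwa [EuclideanSpace.inner_toLp_toLp, star_trivial, dotProduct_comm, mul_left_comm] at h

theorem abs_dotProduct_mulVec_self_le (A : Matrix κ κ ℝ) (x : κ → ℝ) :
    |x ⬝ᵥ A *ᵥ x| ≤ ‖A‖ * ∑ j, x j ^ 2 := by
  simpa only [← sq, EuclideanSpace.real_norm_sq_eq] using abs_dotProduct_mulVec_le A x x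

theorem l2_opNorm_le_of_abs_sum_le {A : Matrix ι κ ℝ} {C : ℝ} (hC : 0 ≤ C)
    (hrow : ∀ i, ∑ j, |A i j| ≤ C) (hcol : ∀ j, ∑ i, |A i j| ≤ C) : ‖A‖ ≤ C := by
  refine l2_opNorm_le_of_sum_sq_mulVec_le hC fun x => ?_
  have hrow_sq (i : ι) : (A *ᵥ x) i ^ 2 ≤ C * ∑ j, |A i j| * x j ^ 2 := by
    have hCS := Finset.sum_sq_le_sum_mul_sum_of_sq_le_mul Finset.univ
      (r := fun j => |A i j| * |x j|) (f := fun j => |A i j|) (g := fun j => |A i j| * x j ^ 2)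
      (fun j _ => abs_nonneg _) (fun j _ => by positivity)
      (fun j _ => by rw [← sq_abs (x j)]; apply le_of_eq; ring)
    calc (A *ᵥ x) i ^ 2 = |∑ j, A i j * x j| ^ 2 := (sq_abs _).symm
      _ ≤ (∑ j, |A i j| * |x j|) ^ 2 := by
        gcongr
        simpa only [abs_mul] using Finset.abs_sum_le_sum_abs (fun j => A i j * x j) Finset.univ
      _ ≤ _ := hCS.trans (by gcongr; exact hrow i)
  calc ∑ i, (A *ᵥ x) i ^ 2 ≤ ∑ i, C * ∑ j, |A i j| * x j ^ 2 :=
        Finset.sum_le_sum fun i _ => hrow_sq i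
    _ = C * ∑ j, (∑ i, |A i j|) * x j ^ 2 := by
        rw [← Finset.mul_sum, Finset.sum_comm]; simp only [Finset.sum_mul]
    _ ≤ C * ∑ j, C * x j ^ 2 := by gcongr; exact hcol _
    _ = C ^ 2 * ∑ j, x j ^ 2 := by rw [← Finset.mul_sum]; ring

-- With `w = (Q - v) y`, positivity of `Q` gives `v ‖w‖² ≤ ⟪w, (Q + v) w⟫ = ⟪w, (Q² - v²) y⟫`.
theorem l2_opNorm_sub_smul_one_le_of_posSemidef [DecidableEq ι] {Q : Matrix ι ι ℝ}
    (hQ : Q.PosSemidef) {v : ℝ} (hv : 0 < v) : ‖Q - v • 1‖ ≤ v⁻¹ * ‖Q * Q - v ^ 2 • 1‖ := by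
  set S := Q * Q - v ^ 2 • (1 : Matrix ι ι ℝ)
  rw [l2_opNorm_def]
  refine ContinuousLinearMap.opNorm_le_bound _ (by positivity) fun y => ?_
  set w := (Q - v • 1) *ᵥ y.ofLp with hw
  change ‖WithLp.toLp 2 w‖ ≤ _
  have hSy : (Q + v • 1) *ᵥ w = S *ᵥ y.ofLp := by
    rw [hw, mulVec_mulVec]
    congr 1
    simp only [S, add_mul, mul_sub, mul_smul_comm, smul_mul_assoc, mul_one, one_mul, smul_add,
      smul_smul, sq]
    abel
  have hw_sq : v * ‖WithLp.toLp 2 w‖ ^ 2 ≤ w ⬝ᵥ S *ᵥ y.ofLp := by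
    have hpos : 0 ≤ w ⬝ᵥ Q *ᵥ w := by simpa using hQ.dotProduct_mulVec_nonneg w
    rw [← hSy, add_mulVec, dotProduct_add, smul_mulVec, one_mulVec, dotProduct_smul,
      EuclideanSpace.real_norm_sq_eq]
    simp only [dotProduct, ← sq, smul_eq_mul] at hpos ⊢
    linarith
  have hbound := hw_sq.trans ((le_abs_self _).trans (abs_dotProduct_mulVec_le S w y.ofLp))
  rw [mul_assoc, ← div_eq_inv_mul, le_div_iff₀' hv]
  rcases (norm_nonneg (WithLp.toLp 2 w)).eq_or_lt with h0 | h0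
  · rw [← h0, mul_zero]; positivity
  · refine le_of_mul_le_mul_right ?_ h0
    simp only [WithLp.toLp_ofLp] at hbound
    linarith

end MatrixNorm

section EntrywiseMap

open scoped Matrix.Norms.L2Operator
open Asymptotics

variable {f : ℝ → ℝ} {c : ℝ}

theorem l2_opNorm_map_sub_smul_one_le {ι : Type*} [Fintype ι] [DecidableEq ι]
    {N : Matrix ι ι ℝ} {κ C : ℝ} (hκ : 0 ≤ κ) (hC : 0 ≤ C)
    (hdiag : ∀ i, |f (N i i) - f 1| ≤ κ)
    (hoff : ∀ i j, i ≠ j → |f (N i j) - c * N i j| ≤ C * N i j ^ 2) :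
    ‖N.map f - f 1 • 1‖ ≤ κ + 2 * |c| * ‖N - 1‖ + C * ‖N - 1‖ ^ 2 := by
  set E := N - 1 with hE
  set R := N.map f - f 1 • 1 - c • E with hR
  have hR_apply (i j : ι) :
      |R i j| ≤ (if i = j then κ + |c| * ‖E‖ else 0) + C * E i j ^ 2 := by
    rcases eq_or_ne i j with rfl | hij
    · have hRii : R i i = (f (N i i) - f 1) - c * E i i := by simp [hR]
      have hEii := abs_apply_le_l2_opNorm E i i
      rw [hRii, if_pos rfl]
      calc _ ≤ |f (N i i) - f 1| + |c * E i i| := abs_sub _ _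
        _ ≤ κ + |c| * ‖E‖ := by rw [abs_mul]; gcongr; exact hdiag i
        _ ≤ _ := le_add_of_nonneg_right (by positivity)
    · have hRij : R i j = f (N i j) - c * N i j := by simp [hR, hE, hij]
      rw [hRij, if_neg hij, zero_add, hE, Matrix.sub_apply, one_apply_ne hij, sub_zero]
      exact hoff i j hij
  have hR_norm : ‖R‖ ≤ κ + |c| * ‖E‖ + C * ‖E‖ ^ 2 := by
    refine l2_opNorm_le_of_abs_sum_le (by positivity) (fun i => ?_) (fun j => ?_)
    · calc _ ≤ ∑ j, ((if i = j then κ + |c| * ‖E‖ else 0) + C * E i j ^ 2) :=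
            Finset.sum_le_sum fun j _ => hR_apply i j
        _ = κ + |c| * ‖E‖ + C * ∑ j, E i j ^ 2 := by
            rw [Finset.sum_add_distrib, Finset.sum_ite_eq, if_pos (Finset.mem_univ i),
              Finset.mul_sum]
        _ ≤ _ := by gcongr; exact sum_row_sq_le_l2_opNorm_sq E i
    · calc _ ≤ ∑ i, ((if i = j then κ + |c| * ‖E‖ else 0) + C * E i j ^ 2) :=
            Finset.sum_le_sum fun i _ => hR_apply i j
        _ = κ + |c| * ‖E‖ + C * ∑ i, E i j ^ 2 := by
            rw [Finset.sum_add_distrib, Finset.sum_ite_eq', if_pos (Finset.mem_univ j),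
              Finset.mul_sum]
        _ ≤ _ := by gcongr; exact sum_col_sq_le_l2_opNorm_sq E j
  calc ‖N.map f - f 1 • 1‖ = ‖R + c • E‖ := by rw [hR, sub_add_cancel]
    _ ≤ ‖R‖ + |c| * ‖E‖ := (norm_add_le _ _).trans_eq (by rw [norm_smul, Real.norm_eq_abs])
    _ ≤ _ := by linarith

theorem tendsto_l2_opNorm_map_sub_smul_one {α : Type*} {l : Filter α} {ι : α → Type*}
    [∀ a, Fintype (ι a)] [∀ a, DecidableEq (ι a)] {N : ∀ a, Matrix (ι a) (ι a) ℝ}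
    (hf1 : ContinuousWithinAt f (Set.Iic 1) 1)
    (hf0 : (fun s => f s - c * s) =O[𝓝 0] fun s => s ^ 2)
    (hN : Tendsto (fun a => ‖N a - 1‖) l (𝓝 0)) (hdiag : ∀ a i, N a i i ≤ 1) :
    Tendsto (fun a => ‖(N a).map f - f 1 • 1‖) l (𝓝 0) := by
  obtain ⟨C, hC, hfC⟩ := hf0.exists_nonneg
  rw [isBigOWith_iff, Metric.eventually_nhds_iff] at hfC
  obtain ⟨δ₀, hδ₀, hfC⟩ := hfC
  rw [Metric.tendsto_nhds]
  intro ε hε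
  obtain ⟨δ₁, hδ₁, hfκ⟩ := Metric.continuousWithinAt_iff.1 hf1 (ε / 2) (half_pos hε)
  have hbound : Tendsto (fun a => ε / 2 + 2 * |c| * ‖N a - 1‖ + C * ‖N a - 1‖ ^ 2) l
      (𝓝 (ε / 2)) := by
    simpa using ((hN.const_mul (2 * |c|)).const_add (ε / 2)).add ((hN.pow 2).const_mul C)
  filter_upwards [hN.eventually_lt_const hδ₀, hN.eventually_lt_const hδ₁,
    hbound.eventually_lt_const (half_lt_self hε)] with a h₀ h₁ hε_lt
  rw [dist_zero_right, norm_norm]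
  refine (l2_opNorm_map_sub_smul_one_le (half_pos hε).le hC (fun i => ?_)
    (fun i j hij => ?_)).trans_lt hε_lt
  · have hNii := (abs_apply_le_l2_opNorm (N a - 1) i i).trans_lt h₁
    rw [Matrix.sub_apply, one_apply_eq] at hNii
    exact (hfκ (hdiag a i) hNii).le
  · have hNij := (abs_apply_le_l2_opNorm (N a - 1) i j).trans_lt h₀
    rw [Matrix.sub_apply, one_apply_ne hij] at hNij
    simpa using hfC hNij

end EntrywiseMap

section Taylor

open Asymptotics

theorem isBigO_sub_sub_mul_sq_of_eventually_hasDerivAt {f f' : ℝ → ℝ} {x : ℝ}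
    (hf : ∀ᶠ r in 𝓝 x, HasDerivAt f (f' r) r) (hf' : DifferentiableAt ℝ f' x) :
    (fun y => f y - f x - f' x * (y - x)) =O[𝓝 x] fun y => (y - x) ^ 2 := by
  obtain ⟨C, hC, hf'C⟩ := hf'.isBigO_sub.exists_nonneg
  rw [isBigOWith_iff] at hf'C
  obtain ⟨δ, hδ, hball⟩ := Metric.eventually_nhds_iff_ball.1 (hf.and hf'C)
  refine IsBigO.of_bound C ?_
  filter_upwards [Metric.ball_mem_nhds x hδ] with y hy
  have hsub : Metric.closedBall x |y - x| ⊆ Metric.ball x δ :=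
    Metric.closedBall_subset_ball hy
  have hmv := (convex_closedBall x |y - x|).norm_image_sub_le_of_norm_hasDerivWithin_le
    (f := fun r => f r - f' x * r) (f' := fun r => f' r - f' x) (C := C * |y - x|)
    (fun r hr => (((hball r (hsub hr)).1.sub
      ((hasDerivAt_id r).const_mul (f' x))).congr_deriv (by simp)).hasDerivWithinAt)
    (fun r hr => (hball r (hsub hr)).2.trans (by gcongr; exact hr))
    (Metric.mem_closedBall_self (abs_nonneg _)) (Metric.mem_closedBall.2 (Real.dist_eq y x).le)
  rw [norm_pow, Real.norm_eq_abs (y - x), sq, ← mul_assoc]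
  refine le_trans (le_of_eq ?_) hmv
  congr 1
  ring

end Taylor

local notation "γ" => gaussianReal 0 1
local notation "φ" => gaussianPDFReal 0 1

section StdGaussian

theorem gaussianPDFReal_zero_one_apply (x : ℝ) :
    φ x = (√(2 * π))⁻¹ * Real.exp (-(1 / 2) * x ^ 2) := by
  simp only [gaussianPDFReal_def, NNReal.coe_one, mul_one, sub_zero]
  congr 2
  ring

theorem continuous_gaussianPDFReal_zero_one : Continuous φ := by
  simp only [continuous_congr gaussianPDFReal_zero_one_apply]
  fun_prop

theorem gaussianPDFReal_zero_one_le_one (x : ℝ) : φ x ≤ 1 := by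
  have hsqrt : 1 ≤ √(2 * π) := Real.one_le_sqrt.2 (by linarith [Real.pi_gt_three])
  rw [gaussianPDFReal_zero_one_apply]
  exact mul_le_one₀ (inv_le_one_of_one_le₀ hsqrt) (Real.exp_pos _).le
    (Real.exp_le_one_iff.2 (by nlinarith [sq_nonneg x]))

theorem integrable_mul_gaussianPDFReal_zero_one : Integrable fun x => x * φ x := by
  refine ((integrable_mul_exp_neg_mul_sq (b := 1 / 2) (by norm_num)).const_mul
    (√(2 * π))⁻¹).congr (ae_of_all _ fun x => ?_)
  simp only [gaussianPDFReal_zero_one_apply]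
  ring

theorem tendsto_gaussianPDFReal_zero_one_atBot : Tendsto φ atBot (𝓝 0) := by
  have hsq : Tendsto (fun x : ℝ => x ^ 2) atBot atTop := by
    simpa only [Function.comp_def, sq_abs] using
      (tendsto_pow_atTop (α := ℝ) two_ne_zero).comp tendsto_abs_atBot_atTop
  have hexp := Real.tendsto_exp_atBot.comp
    (hsq.const_mul_atTop_of_neg (by norm_num : -(1 / 2 : ℝ) < 0))
  simpa only [Function.comp_def, ← gaussianPDFReal_zero_one_apply, mul_zero] using
    hexp.const_mul (√(2 * π))⁻¹

theorem stdGaussianCDF_eq_cdf : stdGaussianCDF = cdf γ :=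
  funext fun a => (cdf_eq_real γ a).symm

theorem stdGaussianCDF_eq_integral (a : ℝ) : stdGaussianCDF a = ∫ x in Set.Iic a, φ x := by
  change (γ).real (Set.Iic a) = _
  rw [← integral_indicator_one measurableSet_Iic,
    integral_gaussianReal_eq_integral_smul one_ne_zero, ← integral_indicator measurableSet_Iic]
  congr 1 with x
  by_cases hx : x ∈ Set.Iic a <;> simp [hx]

theorem hasDerivAt_stdGaussianCDF (a : ℝ) : HasDerivAt stdGaussianCDF (φ a) a := by
  have hint (s : Set ℝ) : IntegrableOn φ s := (integrable_gaussianPDFReal 0 1).integrableOn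
  have hΦ : stdGaussianCDF = fun x => stdGaussianCDF 0 + ∫ t in (0 : ℝ)..x, φ t := by
    ext x
    rw [stdGaussianCDF_eq_integral, stdGaussianCDF_eq_integral,
      ← intervalIntegral.integral_Iic_sub_Iic (hint _) (hint _)]
    ring
  have hφ := continuous_gaussianPDFReal_zero_one
  rw [hΦ]
  exact (intervalIntegral.integral_hasDerivAt_right (hφ.intervalIntegrable _ _)
    (hφ.stronglyMeasurableAtFilter _ _) hφ.continuousAt).const_add _

theorem continuous_stdGaussianCDF : Continuous stdGaussianCDF :=
  continuous_iff_continuousAt.2 fun a => (hasDerivAt_stdGaussianCDF a).continuousAt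

theorem norm_stdGaussianCDF_le_one (a : ℝ) : ‖stdGaussianCDF a‖ ≤ 1 := by
  rw [stdGaussianCDF_eq_cdf, Real.norm_of_nonneg (cdf_nonneg _ _)]
  exact cdf_le_one _ _

end StdGaussian

section Plackett

/-- The density at `(a, b)` of the standard bivariate normal distribution with correlation `r`. -/
def binormalPDF (a b r : ℝ) : ℝ :=
  (2 * π * √(1 - r ^ 2))⁻¹ *
    Real.exp (-((a ^ 2 + b ^ 2 - 2 * r * a * b) / (2 * (1 - r ^ 2))))

/-- Plackett's integral of the bivariate normal density over the correlation; `rfun q i j` is the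
case `a = q i`, `b = q j`. -/
def plackettIntegral (a b ρ : ℝ) : ℝ := ∫ r in (0 : ℝ)..ρ, binormalPDF a b r

/-- The probability that `U ≤ a` and `V ≤ b` for a standard bivariate normal pair `(U, V)` with
correlation `ρ ∈ (-1, 1)`, computed by conditioning on `U`. For `|ρ| ≥ 1` the division by `0` makes
it a junk value. -/
def binormalCDF (a b ρ : ℝ) : ℝ :=
  ∫ x in Set.Iic a, φ x * stdGaussianCDF ((b - ρ * x) / √(1 - ρ ^ 2))

variable {a b ρ r x : ℝ}

theorem gaussianPDFReal_mul_gaussianPDFReal (h : 0 < 1 - ρ ^ 2) :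
    φ x * φ ((b - ρ * x) / √(1 - ρ ^ 2)) * (√(1 - ρ ^ 2))⁻¹ = binormalPDF x b ρ := by
  have hexp : Real.exp (-((x ^ 2 + b ^ 2 - 2 * ρ * x * b) / (2 * (1 - ρ ^ 2)))) =
      Real.exp (-(1 / 2) * x ^ 2) *
        Real.exp (-(1 / 2) * ((b - ρ * x) / √(1 - ρ ^ 2)) ^ 2) := by
    rw [← Real.exp_add, div_pow, Real.sq_sqrt h.le]
    congr 1
    field_simp
    ring
  have hsqrt : (√(2 * π))⁻¹ * (√(2 * π))⁻¹ = (2 * π)⁻¹ := by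
    rw [← mul_inv, Real.mul_self_sqrt (by positivity)]
  rw [binormalPDF, hexp, mul_inv, ← hsqrt, gaussianPDFReal_zero_one_apply,
    gaussianPDFReal_zero_one_apply]
  ring

theorem binormalPDF_nonneg : 0 ≤ binormalPDF a b r := by
  unfold binormalPDF
  positivity

theorem binormalPDF_le (h : 0 < 1 - ρ ^ 2) :
    binormalPDF x b ρ ≤ φ x * (√(1 - ρ ^ 2))⁻¹ := by
  rw [← gaussianPDFReal_mul_gaussianPDFReal h]
  gcongr
  exact mul_le_of_le_one_right (gaussianPDFReal_nonneg 0 1 x) (gaussianPDFReal_zero_one_le_one _)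

theorem hasDerivAt_binormalPDF_left (h : 0 < 1 - ρ ^ 2) :
    HasDerivAt (fun x => binormalPDF x b ρ)
      (binormalPDF x b ρ * ((ρ * b - x) / (1 - ρ ^ 2))) x := by
  have hquad : HasDerivAt (fun x : ℝ => x ^ 2 + b ^ 2 - 2 * ρ * x * b) (2 * x - 2 * ρ * b) x := by
    refine (((hasDerivAt_pow 2 x).add_const (b ^ 2)).sub
      (((hasDerivAt_id x).const_mul (2 * ρ)).mul_const b)).congr_deriv ?_
    simp
  have hexponent : HasDerivAt (fun x => -((x ^ 2 + b ^ 2 - 2 * ρ * x * b) / (2 * (1 - ρ ^ 2))))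
      ((ρ * b - x) / (1 - ρ ^ 2)) x := by
    refine (hquad.div_const (2 * (1 - ρ ^ 2))).neg.congr_deriv ?_
    field_simp
    ring
  refine (hexponent.exp.const_mul (2 * π * √(1 - ρ ^ 2))⁻¹).congr_deriv ?_
  unfold binormalPDF
  ring

theorem tendsto_binormalPDF_atBot (h : 0 < 1 - ρ ^ 2) :
    Tendsto (fun x => binormalPDF x b ρ) atBot (𝓝 0) := by
  have hφ := tendsto_gaussianPDFReal_zero_one_atBot.mul_const (√(1 - ρ ^ 2))⁻¹
  rw [zero_mul] at hφ
  exact squeeze_zero (fun _ => binormalPDF_nonneg) (fun _ => binormalPDF_le h) hφ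

-- The right-hand side is also `∂/∂x` of `binormalPDF x b ρ`, which is why the `ρ`-derivative of
-- `binormalCDF` telescopes to a boundary term.
theorem hasDerivAt_conditionalCDF (h : 0 < 1 - ρ ^ 2) :
    HasDerivAt (fun ρ => φ x * stdGaussianCDF ((b - ρ * x) / √(1 - ρ ^ 2)))
      (binormalPDF x b ρ * ((ρ * b - x) / (1 - ρ ^ 2))) ρ := by
  have hvar : HasDerivAt (fun ρ : ℝ => 1 - ρ ^ 2) (-(2 * ρ)) ρ := by
    simpa using (hasDerivAt_pow 2 ρ).const_sub 1
  have hnum : HasDerivAt (fun ρ : ℝ => b - ρ * x) (-x) ρ := by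
    simpa using ((hasDerivAt_id ρ).mul_const x).const_sub b
  have hs : √(1 - ρ ^ 2) ≠ 0 := Real.sqrt_ne_zero'.2 h
  have harg : HasDerivAt (fun ρ => (b - ρ * x) / √(1 - ρ ^ 2))
      ((ρ * b - x) / (1 - ρ ^ 2) * (√(1 - ρ ^ 2))⁻¹) ρ := by
    refine (hnum.div (hvar.sqrt h.ne') hs).congr_deriv ?_
    rw [Real.sq_sqrt h.le]
    field_simp
    rw [Real.sq_sqrt h.le]
    ring
  refine (((hasDerivAt_stdGaussianCDF _).comp ρ harg).const_mul (φ x)).congr_deriv ?_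
  rw [← gaussianPDFReal_mul_gaussianPDFReal h]
  ring

theorem abs_deriv_conditionalCDF_le {δ : ℝ} (hδ : 0 < δ) (hr : δ < 1 - r ^ 2) :
    |binormalPDF x b r * ((r * b - x) / (1 - r ^ 2))| ≤
      (|b| * φ x + |x * φ x|) * (δ * √δ)⁻¹ := by
  have hr0 : 0 < 1 - r ^ 2 := hδ.trans hr
  have hr1 : |r| ≤ 1 := (sq_le_one_iff_abs_le_one r).1 (by linarith)
  have hnum : |r * b - x| ≤ |b| + |x| := (abs_sub _ _).trans (by
    rw [abs_mul]
    gcongr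
    exact mul_le_of_le_one_left (abs_nonneg b) hr1)
  have hφ : 0 ≤ φ x := gaussianPDFReal_nonneg 0 1 x
  rw [abs_mul, abs_div, abs_of_pos hr0, abs_of_nonneg binormalPDF_nonneg]
  calc binormalPDF x b r * (|r * b - x| / (1 - r ^ 2))
      ≤ (φ x * (√δ)⁻¹) * ((|b| + |x|) / δ) := by
        gcongr
        exact (binormalPDF_le hr0).trans (by gcongr)
    _ = (|b| * φ x + |x * φ x|) * (δ * √δ)⁻¹ := by
        rw [abs_mul, abs_of_nonneg hφ, mul_inv, div_eq_mul_inv]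
        ring

theorem norm_conditionalCDF_le : ‖φ x * stdGaussianCDF ((b - ρ * x) / √(1 - ρ ^ 2))‖ ≤ φ x := by
  have hφ : 0 ≤ φ x := gaussianPDFReal_nonneg 0 1 x
  rw [norm_mul, Real.norm_of_nonneg hφ]
  exact mul_le_of_le_one_right hφ (norm_stdGaussianCDF_le_one _)

theorem continuous_conditionalCDF :
    Continuous fun x => φ x * stdGaussianCDF ((b - ρ * x) / √(1 - ρ ^ 2)) :=
  continuous_gaussianPDFReal_zero_one.mul (continuous_stdGaussianCDF.comp (by fun_prop))

theorem hasDerivAt_binormalCDF (h : 0 < 1 - ρ ^ 2) :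
    HasDerivAt (binormalCDF a b) (binormalPDF a b ρ) ρ := by
  obtain ⟨δ, hδ0, hδ⟩ := exists_between h
  have hnear : {r : ℝ | δ < 1 - r ^ 2} ∈ 𝓝 ρ :=
    (isOpen_lt continuous_const (by fun_prop)).mem_nhds hδ
  have hφ : Integrable φ := integrable_gaussianPDFReal 0 1
  have hcont : Continuous fun x => binormalPDF x b ρ * ((ρ * b - x) / (1 - ρ ^ 2)) := by
    unfold binormalPDF
    fun_prop
  have hparam := hasDerivAt_integral_of_dominated_loc_of_deriv_le
    (μ := volume.restrict (Set.Iic a)) (x₀ := ρ) hnear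
    (F := fun ρ x => φ x * stdGaussianCDF ((b - ρ * x) / √(1 - ρ ^ 2)))
    (F' := fun ρ x => binormalPDF x b ρ * ((ρ * b - x) / (1 - ρ ^ 2)))
    (Eventually.of_forall fun r => continuous_conditionalCDF.aestronglyMeasurable)
    (hφ.integrableOn.mono' continuous_conditionalCDF.aestronglyMeasurable
      (ae_of_all _ fun x => norm_conditionalCDF_le))
    hcont.aestronglyMeasurable
    (ae_of_all _ fun x r hr => abs_deriv_conditionalCDF_le hδ0 hr)
    (((hφ.const_mul |b|).add integrable_mul_gaussianPDFReal_zero_one.abs).mul_const _).integrableOn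
    (ae_of_all _ fun x r hr => hasDerivAt_conditionalCDF (hδ0.trans hr))
  refine hparam.2.congr_deriv ?_
  rw [integral_Iic_of_hasDerivAt_of_tendsto' (fun x _ => hasDerivAt_binormalPDF_left h) hparam.1
    (tendsto_binormalPDF_atBot h), sub_zero]

theorem norm_binormalPDF_le (h : r ∈ Set.Icc (-1 : ℝ) 1) :
    ‖binormalPDF a b r‖ ≤ (√(1 - r ^ 2))⁻¹ := by
  have hr : 0 ≤ 1 - r ^ 2 := by nlinarith [h.1, h.2]
  have hexp : Real.exp (-((a ^ 2 + b ^ 2 - 2 * r * a * b) / (2 * (1 - r ^ 2)))) ≤ 1 := by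
    rw [Real.exp_le_one_iff, neg_nonpos]
    refine div_nonneg ?_ (by positivity)
    nlinarith [sq_nonneg (a - r * b), mul_nonneg hr (sq_nonneg b)]
  have hpi : (2 * π)⁻¹ ≤ 1 := inv_le_one_of_one_le₀ (by linarith [Real.pi_gt_three])
  rw [Real.norm_of_nonneg binormalPDF_nonneg, binormalPDF, mul_inv]
  calc _ ≤ 1 * (√(1 - r ^ 2))⁻¹ * 1 := by gcongr
    _ = (√(1 - r ^ 2))⁻¹ := by ring

theorem intervalIntegrable_binormalPDF : IntervalIntegrable (binormalPDF a b) volume (-1) 1 := by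
  have harcsin : IntervalIntegrable (fun r : ℝ => (√(1 - r ^ 2))⁻¹) volume (-1) 1 := by
    simpa using Polynomial.Chebyshev.intervalIntegrable_sqrt_one_sub_sq_inv
  refine harcsin.mono_fun' ?_ ?_
  · refine Measurable.aestronglyMeasurable ?_
    unfold binormalPDF
    fun_prop
  · rw [Set.uIoc_of_le (by norm_num)]
    filter_upwards [ae_restrict_mem measurableSet_Ioc] with r hr
    exact norm_binormalPDF_le ⟨hr.1.le, hr.2⟩

theorem continuousOn_plackettIntegral : ContinuousOn (plackettIntegral a b) (Set.Icc (-1) 1) := by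
  have huIcc : Set.uIcc (-1 : ℝ) 1 = Set.Icc (-1) 1 := Set.uIcc_of_le (by norm_num)
  rw [← huIcc]
  exact intervalIntegral.continuousOn_primitive_interval' intervalIntegrable_binormalPDF
    (by rw [huIcc]; norm_num)

theorem continuousWithinAt_plackettIntegral_one :
    ContinuousWithinAt (plackettIntegral a b) (Set.Iic 1) 1 :=
  (continuousOn_plackettIntegral 1 (by norm_num)).mono_of_mem_nhdsWithin
    (Icc_mem_nhdsLE (by norm_num))

theorem one_sub_sq_pos (h : ρ ∈ Set.Ioo (-1 : ℝ) 1) : 0 < 1 - ρ ^ 2 := by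
  nlinarith [h.1, h.2]

theorem differentiableAt_binormalPDF (h : 0 < 1 - ρ ^ 2) :
    DifferentiableAt ℝ (binormalPDF a b) ρ := by
  have hπs : 2 * π * √(1 - ρ ^ 2) ≠ 0 := by positivity
  have h2 : 2 * (1 - ρ ^ 2) ≠ 0 := by positivity
  have h' := h.ne'
  unfold binormalPDF
  fun_prop (disch := assumption)

theorem binormalCDF_zero : binormalCDF a b 0 = stdGaussianCDF a * stdGaussianCDF b := by
  simp only [binormalCDF, zero_mul, sub_zero, ne_eq, OfNat.ofNat_ne_zero, not_false_eq_true,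
    zero_pow, Real.sqrt_one, div_one, integral_mul_const]
  rw [← stdGaussianCDF_eq_integral]

theorem binormalCDF_eq_add_plackettIntegral (h : ρ ∈ Set.Ioo (-1 : ℝ) 1) :
    binormalCDF a b ρ = stdGaussianCDF a * stdGaussianCDF b + plackettIntegral a b ρ := by
  have hsub : Set.uIcc 0 ρ ⊆ Set.Ioo (-1 : ℝ) 1 :=
    Set.ordConnected_Ioo.uIcc_subset (by norm_num) h
  have hFTC := intervalIntegral.integral_eq_sub_of_hasDerivAt
    (fun r hr => hasDerivAt_binormalCDF (a := a) (b := b) (one_sub_sq_pos (hsub hr)))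
    (intervalIntegrable_binormalPDF.mono_set (by
      rw [Set.uIcc_of_le (by norm_num : (-1 : ℝ) ≤ 1)]
      exact hsub.trans Set.Ioo_subset_Icc_self))
  rw [plackettIntegral, hFTC, binormalCDF_zero]
  ring

theorem hasDerivAt_plackettIntegral (h : ρ ∈ Set.Ioo (-1 : ℝ) 1) :
    HasDerivAt (plackettIntegral a b) (binormalPDF a b ρ) ρ := by
  refine ((hasDerivAt_binormalCDF (one_sub_sq_pos h)).sub_const
    (stdGaussianCDF a * stdGaussianCDF b)).congr_of_eventuallyEq ?_
  filter_upwards [isOpen_Ioo.mem_nhds h] with r hr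
  rw [binormalCDF_eq_add_plackettIntegral hr, add_sub_cancel_left]

theorem tendsto_sqrt_one_sub_sq :
    Tendsto (fun ρ : ℝ => √(1 - ρ ^ 2)) (𝓝[<] 1) (𝓝[>] 0) := by
  refine tendsto_nhdsWithin_iff.2 ⟨?_, ?_⟩
  · have hcont : Continuous fun ρ : ℝ => √(1 - ρ ^ 2) := by fun_prop
    simpa using (hcont.tendsto 1).mono_left nhdsWithin_le_nhds
  · filter_upwards [Ioo_mem_nhdsLT (by norm_num : (-1 : ℝ) < 1)] with ρ hρ
    exact Real.sqrt_pos.2 (one_sub_sq_pos hρ)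

theorem tendsto_conditionalCDF_one (hxb : x ≠ b) :
    Tendsto (fun ρ => stdGaussianCDF ((b - ρ * x) / √(1 - ρ ^ 2))) (𝓝[<] 1)
      (𝓝 ((Set.Iic b).indicator 1 x)) := by
  have hinv := tendsto_inv_nhdsGT_zero.comp tendsto_sqrt_one_sub_sq
  have hnum : Tendsto (fun ρ : ℝ => b - ρ * x) (𝓝[<] 1) (𝓝 (b - x)) := by
    have hcont : Continuous fun ρ : ℝ => b - ρ * x := by fun_prop
    simpa using (hcont.tendsto 1).mono_left nhdsWithin_le_nhds
  rw [stdGaussianCDF_eq_cdf]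
  rcases lt_or_gt_of_ne hxb with hlt | hgt
  · rw [Set.indicator_of_mem (Set.mem_Iic.2 hlt.le), Pi.one_apply]
    exact (tendsto_cdf_atTop γ).comp (hnum.pos_mul_atTop (sub_pos.2 hlt) hinv)
  · rw [Set.indicator_of_notMem (by simpa using hgt)]
    exact (tendsto_cdf_atBot γ).comp (hnum.neg_mul_atTop (sub_neg.2 hgt) hinv)

theorem tendsto_binormalCDF_one :
    Tendsto (binormalCDF a b) (𝓝[<] 1) (𝓝 (stdGaussianCDF (min a b))) := by
  have hlim : stdGaussianCDF (min a b) =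
      ∫ x in Set.Iic a, φ x * (Set.Iic b).indicator 1 x := by
    rw [stdGaussianCDF_eq_integral, ← Set.Iic_inter_Iic, ← setIntegral_indicator measurableSet_Iic]
    congr 1 with x
    by_cases hx : x ∈ Set.Iic b <;> simp [hx]
  rw [hlim]
  refine tendsto_integral_filter_of_dominated_convergence φ
    (Eventually.of_forall fun ρ => continuous_conditionalCDF.aestronglyMeasurable)
    (Eventually.of_forall fun ρ => ae_of_all _ fun x => norm_conditionalCDF_le)
    (integrable_gaussianPDFReal 0 1).integrableOn ?_
  filter_upwards [ae_restrict_of_ae (Measure.ae_ne volume b)] with x hx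
  exact (tendsto_conditionalCDF_one hx).const_mul (φ x)

theorem stdGaussianCDF_min :
    stdGaussianCDF (min a b) = stdGaussianCDF a * stdGaussianCDF b + plackettIntegral a b 1 := by
  have hP : Tendsto (plackettIntegral a b) (𝓝[<] 1) (𝓝 (plackettIntegral a b 1)) :=
    continuousWithinAt_plackettIntegral_one.tendsto.mono_left
      (nhdsWithin_mono 1 Set.Iio_subset_Iic_self)
  refine tendsto_nhds_unique tendsto_binormalCDF_one
    ((hP.const_add (stdGaussianCDF a * stdGaussianCDF b)).congr' ?_)
  filter_upwards [Ioo_mem_nhdsLT (by norm_num : (-1 : ℝ) < 1)] with ρ hρ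
  rw [binormalCDF_eq_add_plackettIntegral hρ]

end Plackett

section GaussianVector

variable {ι κ κ' : Type*} [Fintype κ] [Fintype κ']

theorem charFunDual_gaussianReal_zero_one (L : StrongDual ℝ ℝ) :
    charFunDual γ L = Complex.exp (-((L 1 : ℝ) ^ 2 / 2 : ℝ)) := by
  have hL : L = InnerProductSpace.toDualMap ℝ ℝ (L 1) := by
    ext
    simp
  rw [hL, ← charFun_eq_charFunDual_toDualMap, charFun_gaussianReal]
  simp

theorem charFunDual_map_mulVec_pi_gaussianReal [Fintype ι] [DecidableEq ι]
    (M : Matrix ι κ ℝ) (L : StrongDual ℝ (ι → ℝ)) :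
    charFunDual ((Measure.pi fun _ : κ => γ).map (M *ᵥ ·)) L =
      Complex.exp (-(((fun i => L (Pi.single i 1)) ⬝ᵥ
        ((M * Mᵀ) *ᵥ fun i => L (Pi.single i 1))) / 2 : ℝ)) := by
  classical
  set l : ι → ℝ := fun i => L (Pi.single i 1) with hl
  have hL (x : ι → ℝ) : L x = l ⬝ᵥ x := by
    conv_lhs => rw [pi_eq_sum_univ' x]
    simp only [map_sum, map_smul, dotProduct, smul_eq_mul, hl, mul_comm]
  have hM : (M *ᵥ ·) = LinearMap.toContinuousLinearMap M.mulVecLin := rfl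
  have hcomp (j : κ) : L (M *ᵥ Pi.single j 1) = (Mᵀ *ᵥ l) j := by
    rw [hL, mulVec_single_one, mulVec_transpose, vecMul]; rfl
  rw [hM, charFunDual_map, charFunDual_pi]
  simp only [charFunDual_gaussianReal_zero_one, ContinuousLinearMap.comp_apply,
    ContinuousLinearMap.single_apply, LinearMap.coe_toContinuousLinearMap', mulVecLin_apply, hcomp]
  rw [← Complex.exp_sum, Finset.sum_neg_distrib, ← Complex.ofReal_sum, ← Finset.sum_div,
    ← mulVec_mulVec, dotProduct_mulVec, ← mulVec_transpose]
  simp only [dotProduct, sq]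

theorem map_mulVec_pi_gaussianReal_eq [Finite ι] {M : Matrix ι κ ℝ}
    {N : Matrix ι κ' ℝ} (h : M * Mᵀ = N * Nᵀ) :
    (Measure.pi fun _ : κ => γ).map (M *ᵥ ·) = (Measure.pi fun _ : κ' => γ).map (N *ᵥ ·) := by
  classical
  have := Fintype.ofFinite ι
  have hM : AEMeasurable (M *ᵥ ·) (Measure.pi fun _ : κ => γ) := by fun_prop
  have hN : AEMeasurable (N *ᵥ ·) (Measure.pi fun _ : κ' => γ) := by fun_prop
  have := Measure.isProbabilityMeasure_map hM
  have := Measure.isProbabilityMeasure_map hN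
  refine Measure.ext_of_charFunDual (funext fun L => ?_)
  rw [charFunDual_map_mulVec_pi_gaussianReal, charFunDual_map_mulVec_pi_gaussianReal, h]

theorem identDistrib_mulVec_pi_gaussianReal [Finite ι] {Ω : Type*} [MeasurableSpace Ω]
    {P : Measure Ω}
    {T : Ω → ι → ℝ} {M : Matrix ι κ ℝ} {N : Matrix ι κ' ℝ}
    (hT : Measurable T) (hlaw : P.map T = (Measure.pi fun _ : κ => γ).map (M *ᵥ ·))
    (h : M * Mᵀ = N * Nᵀ) : IdentDistrib T (N *ᵥ ·) P (Measure.pi fun _ : κ' => γ) where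
  aemeasurable_fst := hT.aemeasurable
  aemeasurable_snd := by fun_prop
  map_eq := hlaw.trans (map_mulVec_pi_gaussianReal_eq h)

variable [Fintype ι] {u v : ι → ℝ}

theorem one_sub_dotProduct_sq_nonneg (hu : u ⬝ᵥ u = 1) (hv : v ⬝ᵥ v = 1) :
    0 ≤ 1 - (u ⬝ᵥ v) ^ 2 := by
  have hCS := Finset.sum_mul_sq_le_sq_mul_sq Finset.univ u v
  simp only [dotProduct, ← sq] at hu hv hCS ⊢
  rw [hu, hv] at hCS
  linarith

theorem map_dotProduct_pair_pi_gaussianReal (hu : u ⬝ᵥ u = 1) (hv : v ⬝ᵥ v = 1) :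
    (Measure.pi fun _ : ι => γ).map (fun z => (u ⬝ᵥ z, v ⬝ᵥ z)) =
      ((γ).prod γ).map fun p => (p.1, (u ⬝ᵥ v) * p.1 + √(1 - (u ⬝ᵥ v) ^ 2) * p.2) := by
  set ρ := u ⬝ᵥ v with hρ
  have hs : √(1 - ρ ^ 2) ^ 2 = 1 - ρ ^ 2 :=
    Real.sq_sqrt (one_sub_dotProduct_sq_nonneg hu hv)
  have hgram : Matrix.of ![u, v] * (Matrix.of ![u, v])ᵀ =
      !![1, 0; ρ, √(1 - ρ ^ 2)] * !![1, 0; ρ, √(1 - ρ ^ 2)]ᵀ := by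
    have hentry (i j : Fin 2) :
        (Matrix.of ![u, v] * (Matrix.of ![u, v])ᵀ) i j = ![u, v] i ⬝ᵥ ![u, v] j := rfl
    ext i j
    rw [hentry]
    fin_cases i <;> fin_cases j <;>
      simp [hu, hv, dotProduct_comm v u, ← hρ, Matrix.mul_apply, Fin.sum_univ_two, ← sq, hs]
  have hpair : Measurable fun w : Fin 2 → ℝ => (w 0, w 1) := by fun_prop
  have hmap := congrArg (Measure.map fun w : Fin 2 → ℝ => (w 0, w 1))
    (map_mulVec_pi_gaussianReal_eq hgram)
  rw [Measure.map_map hpair (by fun_prop), Measure.map_map hpair (by fun_prop)] at hmap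
  refine hmap.trans ?_
  rw [← (measurePreserving_finTwoArrow γ).map_eq, Measure.map_map (by fun_prop) (by fun_prop)]
  congr 1 with w <;> simp [dotProduct, Fin.sum_univ_two, MeasurableEquiv.finTwoArrow]

theorem measurePreserving_dotProduct_pi_gaussianReal (hu : u ⬝ᵥ u = 1) :
    MeasurePreserving (u ⬝ᵥ ·) (Measure.pi fun _ : ι => γ) γ := by
  have hmeas : Measurable (u ⬝ᵥ · : (ι → ℝ) → ℝ) := by fun_prop
  refine ⟨hmeas, ?_⟩
  have hmap := congrArg (Measure.map Prod.fst) (map_dotProduct_pair_pi_gaussianReal hu hu)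
  rw [Measure.map_map measurable_fst (hmeas.prodMk hmeas),
    Measure.map_map measurable_fst (by fun_prop)] at hmap
  exact hmap.trans measurePreserving_fst.map_eq

theorem measurePreserving_mul_add_sqrt_mul {ρ : ℝ} (hρ : 0 ≤ 1 - ρ ^ 2) :
    MeasurePreserving (fun p : ℝ × ℝ => ρ * p.1 + √(1 - ρ ^ 2) * p.2) ((γ).prod γ) γ := by
  have hu : ![1, 0] ⬝ᵥ ![1, 0] = (1 : ℝ) := by simp
  have hv : ![ρ, √(1 - ρ ^ 2)] ⬝ᵥ ![ρ, √(1 - ρ ^ 2)] = 1 := by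
    simp [Real.mul_self_sqrt hρ, ← sq]
  have huv : ![1, 0] ⬝ᵥ ![ρ, √(1 - ρ ^ 2)] = ρ := by simp
  refine ⟨by fun_prop, ?_⟩
  have hmap := congrArg (Measure.map Prod.snd) (map_dotProduct_pair_pi_gaussianReal hu hv)
  rw [huv, Measure.map_map measurable_snd (by fun_prop),
    Measure.map_map measurable_snd (by fun_prop)] at hmap
  exact hmap.symm.trans (measurePreserving_dotProduct_pi_gaussianReal hv).map_eq

end GaussianVector

section GaussianCov

/-- The covariance of `g U` and `h V` for a standard bivariate normal pair `(U, V)` with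
correlation `ρ ∈ [-1, 1]`, realised as `V = ρ U + √(1 - ρ²) W` with `W` independent of `U`. -/
def gaussianCov (g h : ℝ → ℝ) (ρ : ℝ) : ℝ :=
  cov[fun p => g p.1, fun p => h (ρ * p.1 + √(1 - ρ ^ 2) * p.2); (γ).prod γ]

variable {ι : Type*} [Fintype ι] {g h : ℝ → ℝ} {a b ρ : ℝ}

theorem covariance_dotProduct_pi_gaussianReal (hg : Measurable g) (hh : Measurable h)
    {u v : ι → ℝ} (hu : u ⬝ᵥ u = 1) (hv : v ⬝ᵥ v = 1) :
    cov[fun z => g (u ⬝ᵥ z), fun z => h (v ⬝ᵥ z); Measure.pi fun _ : ι => γ] =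
      gaussianCov g h (u ⬝ᵥ v) := by
  have hg' : Measurable fun p : ℝ × ℝ => g p.1 := hg.comp measurable_fst
  have hh' : Measurable fun p : ℝ × ℝ => h p.2 := hh.comp measurable_snd
  have hpair := covariance_map_fun (μ := Measure.pi fun _ : ι => γ)
    (Z := fun z => (u ⬝ᵥ z, v ⬝ᵥ z)) hg'.aestronglyMeasurable hh'.aestronglyMeasurable
    (by fun_prop)
  rw [← hpair, map_dotProduct_pair_pi_gaussianReal hu hv,
    covariance_map_fun hg'.aestronglyMeasurable hh'.aestronglyMeasurable (by fun_prop)]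
  rfl

theorem gaussianCov_one (hg : Measurable g) : gaussianCov g g 1 = Var[g; γ] := by
  simp only [gaussianCov, one_pow, sub_self, Real.sqrt_zero, one_mul, zero_mul, add_zero]
  have hg' : Measurable fun p : ℝ × ℝ => g p.1 := hg.comp measurable_fst
  rw [covariance_self hg'.aemeasurable, measurePreserving_fst.variance_fun_comp hg.aemeasurable]

theorem integral_comp_of_measurePreserving {α β E : Type*} [MeasurableSpace α] [MeasurableSpace β]
    [NormedAddCommGroup E] [NormedSpace ℝ E] {μ : Measure α} {ν : Measure β} {T : α → β} {f : β → E}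
    (hT : MeasurePreserving T μ ν) (hf : AEStronglyMeasurable f ν) :
    ∫ x, f (T x) ∂μ = ∫ y, f y ∂ν := by
  rw [← hT.map_eq, integral_map hT.aemeasurable (by rwa [hT.map_eq])]

theorem integral_indicator_Iic_one (a : ℝ) :
    ∫ x, (Set.Iic a).indicator 1 x ∂γ = stdGaussianCDF a :=
  integral_indicator_one measurableSet_Iic

theorem integral_indicator_Iic_mul_indicator_Iic (hρ : 0 < 1 - ρ ^ 2) :
    ∫ p : ℝ × ℝ, (Set.Iic a).indicator 1 p.1 *
      (Set.Iic b).indicator 1 (ρ * p.1 + √(1 - ρ ^ 2) * p.2) ∂(γ).prod γ =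
        binormalCDF a b ρ := by
  have hs : 0 < √(1 - ρ ^ 2) := Real.sqrt_pos.2 hρ
  have hcond (x : ℝ) : ∫ y, (Set.Iic b).indicator (1 : ℝ → ℝ) (ρ * x + √(1 - ρ ^ 2) * y) ∂γ =
      stdGaussianCDF ((b - ρ * x) / √(1 - ρ ^ 2)) := by
    rw [← integral_indicator_Iic_one]
    congr 1 with y
    simp only [Set.indicator_apply, Set.mem_Iic, le_div_iff₀' hs, le_sub_iff_add_le',
      Pi.one_apply]
  have hmeas : Measurable fun p : ℝ × ℝ => (Set.Iic a).indicator (1 : ℝ → ℝ) p.1 *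
      (Set.Iic b).indicator 1 (ρ * p.1 + √(1 - ρ ^ 2) * p.2) := by
    have hind (c : ℝ) : Measurable ((Set.Iic c).indicator (1 : ℝ → ℝ)) :=
      measurable_one.indicator measurableSet_Iic
    exact ((hind a).comp measurable_fst).mul ((hind b).comp (by fun_prop))
  have hint : Integrable (fun p : ℝ × ℝ => (Set.Iic a).indicator (1 : ℝ → ℝ) p.1 *
      (Set.Iic b).indicator 1 (ρ * p.1 + √(1 - ρ ^ 2) * p.2)) ((γ).prod γ) := by
    refine .of_bound hmeas.aestronglyMeasurable 1 (ae_of_all _ fun p => ?_)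
    simp only [Set.indicator_apply]
    split_ifs <;> simp
  rw [integral_prod _ hint]
  simp only [integral_const_mul, hcond]
  rw [integral_gaussianReal_eq_integral_smul one_ne_zero, binormalCDF,
    ← integral_indicator measurableSet_Iic]
  congr 1 with x
  by_cases hx : x ∈ Set.Iic a <;> simp [hx]

theorem memLp_indicator_Iic (a : ℝ) : MemLp ((Set.Iic a).indicator (1 : ℝ → ℝ)) 2 γ :=
  memLp_indicator_const 2 measurableSet_Iic 1 (Or.inr (measure_ne_top _ _))

theorem gaussianCov_indicator_Iic (hρ : ρ ∈ Set.Ioc (-1 : ℝ) 1) :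
    gaussianCov ((Set.Iic a).indicator 1) ((Set.Iic b).indicator 1) ρ =
      plackettIntegral a b ρ := by
  have hρ' : 0 ≤ 1 - ρ ^ 2 := by nlinarith [hρ.1, hρ.2]
  have hU := measurePreserving_fst (μ := γ) (ν := γ)
  have hV := measurePreserving_mul_add_sqrt_mul hρ'
  have hUa : MemLp (fun p => (Set.Iic a).indicator (1 : ℝ → ℝ) p.1) 2 ((γ).prod γ) :=
    (memLp_indicator_Iic a).comp_measurePreserving hU
  have hVb : MemLp (fun p => (Set.Iic b).indicator (1 : ℝ → ℝ) (ρ * p.1 + √(1 - ρ ^ 2) * p.2)) 2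
      ((γ).prod γ) := (memLp_indicator_Iic b).comp_measurePreserving hV
  rw [gaussianCov, covariance_eq_sub hUa hVb,
    integral_comp_of_measurePreserving hU (memLp_indicator_Iic a).aestronglyMeasurable,
    integral_comp_of_measurePreserving hV (memLp_indicator_Iic b).aestronglyMeasurable,
    integral_indicator_Iic_one, integral_indicator_Iic_one, sub_eq_iff_eq_add']
  rcases hρ.2.eq_or_lt with rfl | hlt
  · rw [← stdGaussianCDF_min, ← integral_indicator_Iic_one,
      ← integral_comp_of_measurePreserving hU (memLp_indicator_Iic _).aestronglyMeasurable]
    congr 1 with p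
    simp [Set.indicator_apply, ← ite_and, and_comm]
  · have hρIoo : ρ ∈ Set.Ioo (-1 : ℝ) 1 := ⟨hρ.1, hlt⟩
    rw [← binormalCDF_eq_add_plackettIntegral hρIoo]
    exact integral_indicator_Iic_mul_indicator_Iic (one_sub_sq_pos hρIoo)

end GaussianCov

section Arms

variable {a b ρ : ℝ}

theorem plackettIntegral_comm : plackettIntegral a b ρ = plackettIntegral b a ρ := by
  simp only [plackettIntegral, binormalPDF, add_comm (a ^ 2), mul_right_comm _ a b]

theorem gaussianCov_indicator_Ioi (hρ : ρ ∈ Set.Ioc (-1 : ℝ) 1) :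
    gaussianCov ((Set.Ioi a).indicator 1) ((Set.Ioi b).indicator 1) ρ =
      plackettIntegral a b ρ := by
  have hρ' : 0 ≤ 1 - ρ ^ 2 := by nlinarith [hρ.1, hρ.2]
  have hcompl (c : ℝ) : (Set.Ioi c).indicator (1 : ℝ → ℝ) =
      fun x => 1 - (Set.Iic c).indicator 1 x := by
    rw [← Set.compl_Iic, Set.indicator_compl]
    rfl
  have hU : MemLp (fun p => (Set.Iic a).indicator (1 : ℝ → ℝ) p.1) 2 ((γ).prod γ) :=
    (memLp_indicator_Iic a).comp_measurePreserving measurePreserving_fst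
  have hV : MemLp (fun p => (Set.Iic b).indicator (1 : ℝ → ℝ) (ρ * p.1 + √(1 - ρ ^ 2) * p.2)) 2
      ((γ).prod γ) :=
    (memLp_indicator_Iic b).comp_measurePreserving (measurePreserving_mul_add_sqrt_mul hρ')
  rw [hcompl a, hcompl b, gaussianCov, covariance_const_sub_left (hU.integrable one_le_two),
    covariance_const_sub_right (hV.integrable one_le_two), neg_neg]
  exact gaussianCov_indicator_Iic hρ

theorem gaussianCov_indicator_Ioc (hab : a ≤ b) (hρ : ρ ∈ Set.Ioc (-1 : ℝ) 1) :
    gaussianCov ((Set.Ioc a b).indicator 1) ((Set.Ioc a b).indicator 1) ρ =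
      plackettIntegral a a ρ + plackettIntegral b b ρ - 2 * plackettIntegral a b ρ := by
  have hρ' : 0 ≤ 1 - ρ ^ 2 := by nlinarith [hρ.1, hρ.2]
  have hdiff : (Set.Ioc a b).indicator (1 : ℝ → ℝ) =
      fun x => (Set.Iic b).indicator 1 x - (Set.Iic a).indicator 1 x := by
    rw [← Set.Iic_sdiff_Iic, Set.indicator_sdiff (Set.Iic_subset_Iic.2 hab)]
    rfl
  have hU (c : ℝ) := (memLp_indicator_Iic c).comp_measurePreserving
    (measurePreserving_fst (μ := γ) (ν := γ))
  have hV (c : ℝ) := (memLp_indicator_Iic c).comp_measurePreserving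
    (measurePreserving_mul_add_sqrt_mul hρ')
  have hexpand := covariance_fun_sub_fun_sub (hU b) (hU a) (hV b) (hV a)
  rw [hdiff, gaussianCov]
  refine hexpand.trans ?_
  have hP (c e : ℝ) := gaussianCov_indicator_Iic (a := c) (b := e) hρ
  simp only [gaussianCov] at hP
  simp only [Function.comp_def, hP, plackettIntegral_comm (a := b) (b := a)]
  ring

variable {K : ℕ} {k : Fin K} {q : ℕ → ℝ}

theorem measurableSet_armSet : MeasurableSet (armSet q K k) := by
  unfold armSet
  split_ifs
  exacts [measurableSet_Iic, measurableSet_Ioi, measurableSet_Ioc]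

theorem quantile_le_quantile_succ
    (hq : ∀ m : ℕ, 0 < m → m < K → stdGaussianCDF (q m) = (m : ℝ) / K)
    {m : ℕ} (hm : 0 < m) (hmK : m + 1 < K) : q m ≤ q (m + 1) := by
  have hK : (0 : ℝ) < K := by exact_mod_cast (by lia : 0 < K)
  by_contra! hlt
  have hmono := monotone_cdf γ hlt.le
  rw [← stdGaussianCDF_eq_cdf, hq m hm (by lia), hq (m + 1) (by lia) hmK,
    div_le_div_iff_of_pos_right hK, Nat.cast_le] at hmono
  lia

theorem gaussianReal_real_armSet (hK : 2 ≤ K)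
    (hq : ∀ m : ℕ, 0 < m → m < K → stdGaussianCDF (q m) = (m : ℝ) / K) :
    (γ).real (armSet q K k) = 1 / K := by
  have hK0 : (K : ℝ) ≠ 0 := by positivity
  have hIic (m : ℕ) (hm : 0 < m) (hmK : m < K) : (γ).real (Set.Iic (q m)) = (m : ℝ) / K :=
    hq m hm hmK
  have hk := k.2
  unfold armSet
  split_ifs with hk0 hkK
  · rw [hIic 1 one_pos hK, Nat.cast_one]
  · rw [← Set.compl_Iic, probReal_compl_eq_one_sub measurableSet_Iic,
      hIic (K - 1) (by lia) (by lia), Nat.cast_pred (by lia)]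
    field_simp
    ring
  · rw [← Set.Iic_sdiff_Iic, measureReal_sdiff
      (Set.Iic_subset_Iic.2 (quantile_le_quantile_succ hq (by lia) (by lia))) measurableSet_Iic,
      hIic _ (by lia) (by lia), hIic _ (by lia) (by lia), Nat.cast_succ]
    field_simp
    ring

theorem gaussianCov_indicator_armSet
    (hq : ∀ m : ℕ, 0 < m → m < K → stdGaussianCDF (q m) = (m : ℝ) / K)
    (hρ : ρ ∈ Set.Ioc (-1 : ℝ) 1) :
    gaussianCov ((armSet q K k).indicator 1) ((armSet q K k).indicator 1) ρ = fkfun q K k ρ := by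
  have hk := k.2
  unfold armSet fkfun
  split_ifs with hk0 hkK
  · exact gaussianCov_indicator_Iic hρ
  · exact gaussianCov_indicator_Ioi hρ
  · exact gaussianCov_indicator_Ioc (quantile_le_quantile_succ hq (by lia) (by lia)) hρ

theorem variance_indicator_one {α : Type*} [MeasurableSpace α] {μ : Measure α}
    [IsProbabilityMeasure μ] {s : Set α} (hs : MeasurableSet s) :
    Var[s.indicator (1 : α → ℝ); μ] = μ.real s - μ.real s ^ 2 := by
  have hL2 : MemLp (s.indicator (1 : α → ℝ)) 2 μ :=
    memLp_indicator_const 2 hs 1 (Or.inr (measure_ne_top _ _))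
  have hsq : s.indicator (1 : α → ℝ) ^ 2 = s.indicator 1 := by
    ext x
    by_cases hx : x ∈ s <;> simp [hx]
  rw [variance_eq_sub hL2, hsq, integral_indicator_one hs]

theorem fkfun_one (hK : 2 ≤ K)
    (hq : ∀ m : ℕ, 0 < m → m < K → stdGaussianCDF (q m) = (m : ℝ) / K) :
    fkfun q K k 1 = ((K : ℝ) - 1) / K ^ 2 := by
  have hK0 : (K : ℝ) ≠ 0 := by positivity
  rw [← gaussianCov_indicator_armSet hq (by norm_num),
    gaussianCov_one (measurable_one.indicator measurableSet_armSet),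
    variance_indicator_one measurableSet_armSet, gaussianReal_real_armSet hK hq]
  field_simp

theorem fkfun_one_pos (hK : 2 ≤ K)
    (hq : ∀ m : ℕ, 0 < m → m < K → stdGaussianCDF (q m) = (m : ℝ) / K) : 0 < fkfun q K k 1 := by
  have hK1 : (0 : ℝ) < (K : ℝ) - 1 := sub_pos.2 (by exact_mod_cast hK)
  rw [fkfun_one hK hq]
  positivity

theorem fkfun_zero : fkfun q K k 0 = 0 := by
  simp [fkfun, rfun]

theorem continuousWithinAt_fkfun_one : ContinuousWithinAt (fkfun q K k) (Set.Iic 1) 1 := by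
  have hP (i j : ℕ) : ContinuousWithinAt (rfun q i j) (Set.Iic 1) 1 :=
    continuousWithinAt_plackettIntegral_one
  unfold fkfun
  split_ifs
  exacts [hP _ _, hP _ _, ((hP _ _).add (hP _ _)).sub ((hP _ _).const_mul 2)]

theorem isBigO_fkfun_sub_deriv_mul :
    (fun s => fkfun q K k s - deriv (fkfun q K k) 0 * s) =O[𝓝 0] fun s => s ^ 2 := by
  obtain ⟨f', hf, hf'⟩ : ∃ f' : ℝ → ℝ,
      (∀ r ∈ Set.Ioo (-1 : ℝ) 1, HasDerivAt (fkfun q K k) (f' r) r) ∧ DifferentiableAt ℝ f' 0 := by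
    have hP (i j : ℕ) {r : ℝ} (hr : r ∈ Set.Ioo (-1 : ℝ) 1) :
        HasDerivAt (rfun q i j) (binormalPDF (q i) (q j) r) r := hasDerivAt_plackettIntegral hr
    have hd (i j : ℕ) : DifferentiableAt ℝ (binormalPDF (q i) (q j)) 0 :=
      differentiableAt_binormalPDF (by norm_num)
    unfold fkfun
    split_ifs
    · exact ⟨_, fun r hr => hP _ _ hr, hd _ _⟩
    · exact ⟨_, fun r hr => hP _ _ hr, hd _ _⟩
    · exact ⟨_, fun r hr => ((hP _ _ hr).add (hP _ _ hr)).sub ((hP _ _ hr).const_mul 2),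
        ((hd _ _).add (hd _ _)).sub ((hd _ _).const_mul 2)⟩
  rw [(hf 0 (by norm_num)).deriv]
  simpa only [fkfun_zero, sub_zero] using isBigO_sub_sub_mul_sq_of_eventually_hasDerivAt
    (eventually_of_mem (Ioo_mem_nhds (by norm_num) (by norm_num)) hf) hf'

end Arms

section RowNormalize

open scoped Matrix.Norms.L2Operator

variable {ι : Type*} [Fintype ι] [DecidableEq ι] {U : Matrix ι ι ℝ}

/-- The matrix whose rows are those of `U` scaled to unit Euclidean norm; a zero row stays zero. -/
def rowNormalize (U : Matrix ι ι ℝ) : Matrix ι ι ℝ :=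
  diagonal (fun i => (√(∑ l, U i l ^ 2))⁻¹) * U

theorem rowNormalize_apply (i j : ι) : rowNormalize U i j = (√(∑ l, U i l ^ 2))⁻¹ * U i j :=
  diagonal_mul _ _ _ _

omit [DecidableEq ι] in
theorem one_le_sqrt_sum_sq_of_apply_eq_one {u : ι → ℝ} {i : ι} (hu : u i = 1) :
    1 ≤ √(∑ l, u l ^ 2) := by
  rw [Real.one_le_sqrt]
  simpa [hu] using
    Finset.single_le_sum (f := fun l => u l ^ 2) (fun _ _ => sq_nonneg _) (Finset.mem_univ i)

theorem dotProduct_rowNormalize_self (hU : ∀ i, U i i = 1) (i : ι) :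
    rowNormalize U i ⬝ᵥ rowNormalize U i = 1 := by
  have hpos := one_pos.trans_le (one_le_sqrt_sum_sq_of_apply_eq_one (hU i))
  simp only [dotProduct, rowNormalize_apply, ← sq, mul_pow]
  rw [← Finset.mul_sum, inv_pow, Real.sq_sqrt (by positivity),
    inv_mul_cancel₀ (Real.sqrt_pos.1 hpos).ne']

theorem l2_opNorm_one_le : ‖(1 : Matrix ι ι ℝ)‖ ≤ 1 := by
  rw [← diagonal_one, l2_opNorm_diagonal]
  exact (pi_norm_const_le _).trans norm_one.le

theorem sqrt_sum_row_sq_le (i : ι) : √(∑ l, U i l ^ 2) ≤ 1 + ‖U - 1‖ :=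
  calc √(∑ l, U i l ^ 2) ≤ ‖U‖ := Real.sqrt_le_left (norm_nonneg U) |>.2
        (sum_row_sq_le_l2_opNorm_sq U i)
    _ ≤ ‖(1 : Matrix ι ι ℝ)‖ + ‖U - 1‖ := norm_le_norm_add_norm_sub' U 1
    _ ≤ 1 + ‖U - 1‖ := by gcongr; exact l2_opNorm_one_le

theorem l2_opNorm_rowNormalize_sub_one_le (hU : ∀ i, U i i = 1) :
    ‖rowNormalize U - 1‖ ≤ 2 * ‖U - 1‖ := by
  set s : ι → ℝ := fun i => √(∑ l, U i l ^ 2)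
  set e := ‖U - 1‖
  have hs_one (i : ι) : 1 ≤ s i := one_le_sqrt_sum_sq_of_apply_eq_one (hU i)
  have hs_inv (i : ι) : (s i)⁻¹ ≤ 1 := inv_le_one_of_one_le₀ (hs_one i)
  have hs_pos (i : ι) : 0 < (s i)⁻¹ := inv_pos.2 (one_pos.trans_le (hs_one i))
  have hD : ‖diagonal fun i => (s i)⁻¹‖ ≤ 1 := by
    rw [l2_opNorm_diagonal, pi_norm_le_iff_of_nonneg zero_le_one]
    intro i
    rw [Real.norm_of_nonneg (hs_pos i).le]
    exact hs_inv i
  have hD_sub : ‖diagonal (fun i => (s i)⁻¹) - 1‖ ≤ e := by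
    rw [← diagonal_one, diagonal_sub, l2_opNorm_diagonal, pi_norm_le_iff_of_nonneg (norm_nonneg _)]
    intro i
    rw [norm_sub_rev, Real.norm_of_nonneg (sub_nonneg.2 (hs_inv i))]
    calc 1 - (s i)⁻¹ ≤ s i - 1 := by
          linarith [mul_nonneg (sub_nonneg.2 (hs_one i)) (sub_nonneg.2 (hs_inv i)),
            mul_inv_cancel₀ (inv_pos.1 (hs_pos i)).ne']
      _ ≤ e := by linarith [sqrt_sum_row_sq_le (U := U) i]
  calc ‖rowNormalize U - 1‖
      = ‖diagonal (fun i => (s i)⁻¹) * (U - 1) + (diagonal (fun i => (s i)⁻¹) - 1)‖ := by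
        rw [Matrix.mul_sub, Matrix.mul_one, sub_add_sub_cancel, rowNormalize]
    _ ≤ ‖diagonal fun i => (s i)⁻¹‖ * e + e :=
        (norm_add_le _ _).trans (add_le_add (l2_opNorm_mul _ _) hD_sub)
    _ ≤ 1 * e + e := by gcongr
    _ = 2 * e := by ring

theorem l2_opNorm_mul_transpose_sub_one_le (B : Matrix ι ι ℝ) :
    ‖B * Bᵀ - 1‖ ≤ ‖B - 1‖ ^ 2 + 2 * ‖B - 1‖ := by
  have hexpand : B * Bᵀ - 1 = (B - 1) * (B - 1)ᵀ + (B - 1) + (B - 1)ᵀ := by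
    rw [Matrix.transpose_sub, Matrix.transpose_one]
    noncomm_ring
  calc ‖B * Bᵀ - 1‖ ≤ ‖B - 1‖ * ‖(B - 1)ᵀ‖ + ‖B - 1‖ + ‖(B - 1)ᵀ‖ := by
        rw [hexpand]
        refine (norm_add₃_le ..).trans ?_
        gcongr
        exact l2_opNorm_mul _ _
    _ = ‖B - 1‖ ^ 2 + 2 * ‖B - 1‖ := by
        rw [l2_opNorm_transpose]
        ring

end RowNormalize

section PGD

open scoped Matrix.Norms.L2Operator

variable {n d : ℕ} {X : Matrix (Fin n) (Fin d) ℝ} {η c : ℝ}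

/-- The gradient step `U = I - η c (XXᵀ - I)` of `pgd`, before its rows are normalised. -/
def gradStep (X : Matrix (Fin n) (Fin d) ℝ) (η c : ℝ) : Matrix (Fin n) (Fin n) ℝ :=
  1 - (η * c) • (X * Xᵀ - 1)

theorem transpose_gradStep : (gradStep X η c)ᵀ = gradStep X η c := by
  simp [gradStep, transpose_sub, transpose_smul, transpose_mul]

theorem gradStep_apply_self (hX : ∀ i, ∑ j, X i j ^ 2 = 1) (i : Fin n) :
    gradStep X η c i i = 1 := by
  have hXX : (X * Xᵀ) i i = 1 := by simpa only [mul_apply, transpose_apply, ← sq] using hX i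
  simp [gradStep, hXX]

theorem l2_opNorm_gradStep_sub_one :
    ‖gradStep X η c - 1‖ = |η * c| * opNorm (X * Xᵀ - 1) := by
  rw [gradStep, sub_sub_cancel_left, norm_neg, norm_smul, Real.norm_eq_abs]
  rfl

theorem pgd_eq_mul_transpose :
    pgd X η c = rowNormalize (gradStep X η c) * (rowNormalize (gradStep X η c))ᵀ := by
  have hgram (i j : Fin n) : (gradStep X η c * gradStep X η c) i j =
      (gradStep X η c * (gradStep X η c)ᵀ) i j := by
    rw [transpose_gradStep]
  ext i j
  rw [pgd, of_apply, ← gradStep, hgram, mul_apply, mul_apply, Finset.sum_div]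
  congr 1 with l
  rw [transpose_apply, transpose_apply, rowNormalize_apply, rowNormalize_apply, div_eq_inv_mul,
    mul_inv, mul_mul_mul_comm]

end PGD

section WeightedCLT

open Asymptotics

theorem norm_prod_sub_prod_le {ι 𝕜 : Type*} [NormedField 𝕜] (s : Finset ι) {x y : ι → 𝕜}
    (hx : ∀ i, ‖x i‖ ≤ 1) (hy : ∀ i, ‖y i‖ ≤ 1) :
    ‖∏ i ∈ s, x i - ∏ i ∈ s, y i‖ ≤ ∑ i ∈ s, ‖x i - y i‖ := by
  induction s using Finset.cons_induction with
  | empty => simp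
  | cons j s hj ih =>
    rw [Finset.prod_cons, Finset.prod_cons, Finset.sum_cons]
    calc _ = ‖(x j - y j) * ∏ i ∈ s, x i + y j * (∏ i ∈ s, x i - ∏ i ∈ s, y i)‖ := by
          congr 1
          ring
      _ ≤ ‖x j - y j‖ * ∏ i ∈ s, ‖x i‖ + ‖y j‖ * ‖∏ i ∈ s, x i - ∏ i ∈ s, y i‖ := by
          rw [← norm_prod, ← norm_mul, ← norm_mul]
          exact norm_add_le _ _
      _ ≤ ‖x j - y j‖ * 1 + 1 * ∑ i ∈ s, ‖x i - y i‖ := by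
          gcongr
          exacts [Finset.prod_le_one (fun _ _ => norm_nonneg _) fun i _ => hx i, hy j]
      _ = _ := by rw [mul_one, one_mul]

theorem isLittleO_charFun_sub_charFun {μ ν : Measure ℝ} [IsFiniteMeasure μ] [IsFiniteMeasure ν]
    {n : ℕ} (hμ : MemLp id n μ) (hν : MemLp id n ν)
    (hmom : ∀ m ≤ n, ∫ x, x ^ m ∂μ = ∫ x, x ^ m ∂ν) :
    (fun t => charFun μ t - charFun ν t) =o[𝓝 0] fun t => t ^ n := by
  have htaylor (t : ℝ) : taylorWithinEval (charFun μ) n Set.univ 0 t =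
      taylorWithinEval (charFun ν) n Set.univ 0 t := by
    rw [taylorWithinEval_charFun_zero hμ, taylorWithinEval_charFun_zero hν]
    refine Finset.sum_congr rfl fun m hm => ?_
    rw [hmom m (Finset.mem_range_succ_iff.1 hm)]
  have hdiff := (taylor_isLittleO_univ (contDiff_charFun hμ) (x₀ := 0)).sub
    (taylor_isLittleO_univ (contDiff_charFun hν))
  simpa only [htaylor, sub_sub_sub_cancel_right, sub_zero] using hdiff

theorem isLittleO_charFun_sub_charFun_gaussianReal {μ : Measure ℝ} [IsProbabilityMeasure μ]
    (hμ : MemLp id 2 μ) (hmean : ∫ x, x ∂μ = 0) {v : ℝ≥0} (hvar : ∫ x, x ^ 2 ∂μ = v) :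
    (fun t => charFun μ t - charFun (gaussianReal 0 v) t) =o[𝓝 0] fun t => t ^ 2 := by
  have hgauss : ∫ x, x ^ 2 ∂gaussianReal 0 v = v := by
    simpa using variance_of_integral_eq_zero (μ := gaussianReal 0 v) aemeasurable_id (by simp)
      |>.symm.trans variance_id_gaussianReal
  refine isLittleO_charFun_sub_charFun hμ (memLp_id_gaussianReal 2) fun m hm => ?_
  interval_cases m
  · simp
  · simpa using hmean
  · exact hvar.trans hgauss.symm

variable {α : Type*} {l : Filter α} {ι : α → Type*} [∀ a, Fintype (ι a)] {w : ∀ a, ι a → ℝ}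

theorem tendsto_prod_sub_prod_of_isLittleO {𝕜 : Type*} [NormedField 𝕜] {f g : ℝ → 𝕜}
    (hf : ∀ t, ‖f t‖ ≤ 1) (hg : ∀ t, ‖g t‖ ≤ 1)
    (hfg : (fun t => f t - g t) =o[𝓝 0] fun t => t ^ 2)
    (hw : Tendsto (fun a => ‖w a‖) l (𝓝 0))
    (hw2 : IsBoundedUnder (· ≤ ·) l fun a => ∑ i, w a i ^ 2) (t : ℝ) :
    Tendsto (fun a => ∏ i, f (w a i * t) - ∏ i, g (w a i * t)) l (𝓝 0) := by
  obtain ⟨C, hC⟩ := hw2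
  rw [eventually_map] at hC
  have hsmall : Tendsto (fun a => ‖w a‖ * |t|) l (𝓝 0) := by simpa using hw.mul_const |t|
  rw [← isLittleO_one_iff ℝ, isLittleO_iff]
  intro ε hε
  have hden : 0 < t ^ 2 * |C| + 1 := by positivity
  obtain ⟨δ, hδ, hclose⟩ := Metric.eventually_nhds_iff.1 (hfg.def (div_pos hε hden))
  filter_upwards [hC, hsmall.eventually_lt_const hδ] with a hCa hδa
  have hterm (i : ι a) :
      ‖f (w a i * t) - g (w a i * t)‖ ≤ ε / (t ^ 2 * |C| + 1) * (w a i * t) ^ 2 := by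
    refine (hclose ?_).trans_eq (by rw [norm_of_nonneg (sq_nonneg _)])
    rw [dist_zero_right, norm_mul]
    exact (mul_le_mul_of_nonneg_right (norm_le_pi_norm (w a) i) (norm_nonneg t)).trans_lt hδa
  calc ‖∏ i, f (w a i * t) - ∏ i, g (w a i * t)‖
      ≤ ∑ i, ‖f (w a i * t) - g (w a i * t)‖ :=
        norm_prod_sub_prod_le _ (fun _ => hf _) fun _ => hg _
    _ ≤ ∑ i, ε / (t ^ 2 * |C| + 1) * (w a i * t) ^ 2 := Finset.sum_le_sum fun i _ => hterm i
    _ = ε / (t ^ 2 * |C| + 1) * (t ^ 2 * ∑ i, w a i ^ 2) := by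
        simp_rw [mul_pow, ← Finset.mul_sum, ← Finset.sum_mul, mul_comm (t ^ 2)]
    _ ≤ ε / (t ^ 2 * |C| + 1) * (t ^ 2 * |C| + 1) := by
        gcongr
        exact le_add_of_le_of_nonneg
          (mul_le_mul_of_nonneg_left (hCa.trans (le_abs_self C)) (sq_nonneg t)) zero_le_one
    _ = ε * ‖(1 : ℝ)‖ := by rw [div_mul_cancel₀ _ hden.ne', norm_one, mul_one]

theorem charFun_map_sum_mul_pi {κ Ω : Type*} [Fintype κ] [MeasurableSpace Ω] {μ : Measure Ω}
    [IsProbabilityMeasure μ] {X : Ω → ℝ} (hX : AEMeasurable X μ) (c : κ → ℝ) (t : ℝ) :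
    charFun ((Measure.pi fun _ : κ => μ).map fun z => ∑ i, c i * X (z i)) t =
      ∏ i, charFun (μ.map X) (c i * t) := by
  have heval (i : κ) := measurePreserving_eval (fun _ : κ => μ) i
  have hmeas (i : κ) : AEMeasurable (fun z : κ → Ω => X (z i)) (Measure.pi fun _ => μ) :=
    hX.comp_quasiMeasurePreserving (heval i).quasiMeasurePreserving
  rw [(iIndepFun_pi fun i => hX.const_mul (c i)).charFun_map_fun_sum_eq_prod
    fun i => (hmeas i).const_mul (c i), Finset.prod_apply]
  refine Finset.prod_congr rfl fun i _ => ?_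
  have hlaw : (Measure.pi fun _ : κ => μ).map (fun z => X (z i)) = μ.map X := by
    have hX' : AEMeasurable X ((Measure.pi fun _ : κ => μ).map (Function.eval i)) := by
      rwa [(heval i).map_eq]
    exact (AEMeasurable.map_map_of_aemeasurable hX' (heval i).aemeasurable).symm.trans
      (by rw [(heval i).map_eq])
  rw [charFun_map_mul_comp (hmeas i), hlaw]

theorem prod_charFun_gaussianReal_mul {κ : Type*} [Fintype κ] (v : ℝ≥0) (c : κ → ℝ) (t : ℝ) :
    ∏ i, charFun (gaussianReal 0 v) (c i * t) =
      Complex.exp (-((v * ∑ i, c i ^ 2 : ℝ) * t ^ 2 / 2 : ℂ)) := by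
  simp_rw [charFun_gaussianReal, ← Complex.exp_sum]
  congr 1
  push_cast
  rw [Finset.mul_sum, Finset.sum_mul, Finset.sum_div, ← Finset.sum_neg_distrib]
  refine Finset.sum_congr rfl fun i _ => ?_
  ring

omit [∀ a, Fintype (ι a)] in
theorem isBoundedUnder_le_of_tendsto_const_mul {f : α → ℝ} {c x : ℝ} (hc : c ≠ 0)
    (h : Tendsto (fun a => c * f a) l (𝓝 x)) : IsBoundedUnder (· ≤ ·) l f := by
  simpa only [inv_mul_cancel_left₀ hc] using (h.const_mul c⁻¹).isBoundedUnder_le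

theorem tendsto_charFun_map_sum_mul_pi {Ω : Type*} [MeasurableSpace Ω] {μ : Measure Ω}
    [IsProbabilityMeasure μ] {X : Ω → ℝ} (hX : MemLp X 2 μ) (hmean : μ[X] = 0)
    (hvar : 0 < Var[X; μ]) {σ2 : ℝ≥0} (hw : Tendsto (fun a => ‖w a‖) l (𝓝 0))
    (hσ : Tendsto (fun a => Var[X; μ] * ∑ i, w a i ^ 2) l (𝓝 σ2)) (t : ℝ) :
    Tendsto (fun a => charFun ((Measure.pi fun _ : ι a => μ).map fun z => ∑ i, w a i * X (z i)) t)
      l (𝓝 (charFun (gaussianReal 0 σ2) t)) := by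
  have := Measure.isProbabilityMeasure_map hX.aemeasurable
  set v : ℝ≥0 := Var[X; μ].toNNReal
  have hcoe : (v : ℝ) = Var[X; μ] := Real.coe_toNNReal _ hvar.le
  have hlittle := isLittleO_charFun_sub_charFun_gaussianReal (μ := μ.map X) (v := v)
    ((memLp_map_measure_iff aestronglyMeasurable_id hX.aemeasurable).2 hX)
    (by rwa [integral_map hX.aemeasurable (by fun_prop)])
    (by rw [integral_map hX.aemeasurable (by fun_prop), hcoe,
      variance_of_integral_eq_zero hX.aemeasurable hmean])
  have hbdd : IsBoundedUnder (· ≤ ·) l fun a => ∑ i, w a i ^ 2 :=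
    isBoundedUnder_le_of_tendsto_const_mul hvar.ne' hσ
  have hdiff := tendsto_prod_sub_prod_of_isLittleO (fun s => norm_charFun_le_one (μ := μ.map X) s)
    (fun s => norm_charFun_le_one s) hlittle hw hbdd t
  have hgauss : Tendsto (fun a => ∏ i, charFun (gaussianReal 0 v) (w a i * t)) l
      (𝓝 (charFun (gaussianReal 0 σ2) t)) := by
    have hcont : Continuous fun s : ℝ => Complex.exp (-(s * t ^ 2 / 2 : ℂ)) := by fun_prop
    have hexp : charFun (gaussianReal 0 σ2) t = Complex.exp (-(σ2 * t ^ 2 / 2 : ℂ)) := by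
      simp [charFun_gaussianReal]
    simp_rw [prod_charFun_gaussianReal_mul, hcoe, hexp]
    exact (hcont.tendsto σ2).comp hσ
  simpa only [charFun_map_sum_mul_pi hX.aemeasurable, sub_add_cancel, zero_add]
    using hdiff.add hgauss

end WeightedCLT

section MeanSquare

theorem sq_integral_abs_le {Ω : Type*} [MeasurableSpace Ω] {μ : Measure Ω}
    [IsProbabilityMeasure μ] {X : Ω → ℝ} (hX : MemLp X 2 μ) :
    (∫ ω, |X ω| ∂μ) ^ 2 ≤ ∫ ω, X ω ^ 2 ∂μ := by
  have hvar := variance_eq_sub hX.abs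
  simp only [Pi.pow_apply, Pi.abs_apply, sq_abs] at hvar
  linarith [variance_nonneg |X| μ]

theorem norm_cexp_mul_I_sub_cexp_mul_I_le (x y : ℝ) :
    ‖Complex.exp (x * Complex.I) - Complex.exp (y * Complex.I)‖ ≤ |x - y| := by
  have hfactor : Complex.exp (x * Complex.I) - Complex.exp (y * Complex.I) =
      Complex.exp (y * Complex.I) * (Complex.exp (Complex.I * (x - y : ℝ)) - 1) := by
    rw [mul_sub, mul_one, ← Complex.exp_add]
    congr 2
    push_cast
    ring
  rw [hfactor, norm_mul, Complex.norm_exp_ofReal_mul_I, one_mul]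
  exact Real.norm_exp_I_mul_ofReal_sub_one_le

theorem norm_charFun_map_sub_charFun_map_le {Ω : Type*} [MeasurableSpace Ω] {μ : Measure Ω}
    [IsProbabilityMeasure μ] {X Y : Ω → ℝ} (hX : AEMeasurable X μ) (hY : AEMeasurable Y μ)
    (hXY : MemLp (fun ω => X ω - Y ω) 2 μ) (t : ℝ) :
    ‖charFun (μ.map X) t - charFun (μ.map Y) t‖ ≤ |t| * √(∫ ω, (X ω - Y ω) ^ 2 ∂μ) := by
  have hint {Z : Ω → ℝ} (hZ : AEMeasurable Z μ) :
      Integrable (fun ω => Complex.exp ((t * Z ω : ℝ) * Complex.I)) μ :=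
    .of_bound (by fun_prop) 1 (ae_of_all _ fun ω => (Complex.norm_exp_ofReal_mul_I _).le)
  have hchar {Z : Ω → ℝ} (hZ : AEMeasurable Z μ) :
      charFun (μ.map Z) t = ∫ ω, Complex.exp ((t * Z ω : ℝ) * Complex.I) ∂μ := by
    rw [charFun_apply_real, integral_map hZ (by fun_prop)]
    simp only [Complex.ofReal_mul]
  rw [hchar hX, hchar hY, ← integral_sub (hint hX) (hint hY)]
  calc ‖∫ ω, (Complex.exp ((t * X ω : ℝ) * Complex.I) -
        Complex.exp ((t * Y ω : ℝ) * Complex.I)) ∂μ‖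
      ≤ ∫ ω, |t| * |X ω - Y ω| ∂μ := by
        refine norm_integral_le_of_norm_le ((hXY.integrable one_le_two).abs.const_mul _)
          (ae_of_all _ fun ω => ?_)
        rw [← abs_mul, mul_sub]
        exact norm_cexp_mul_I_sub_cexp_mul_I_le _ _
    _ ≤ |t| * √(∫ ω, (X ω - Y ω) ^ 2 ∂μ) := by
        rw [integral_const_mul]
        exact mul_le_mul_of_nonneg_left (Real.le_sqrt_of_sq_le (sq_integral_abs_le hXY))
          (abs_nonneg t)

theorem tendsto_charFun_map_sub_charFun_map_of_variance {α : Type*} {l : Filter α}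
    {Ω : α → Type*} [∀ a, MeasurableSpace (Ω a)] {μ : ∀ a, Measure (Ω a)}
    [∀ a, IsProbabilityMeasure (μ a)] {X Y : ∀ a, Ω a → ℝ} (hX : ∀ a, MemLp (X a) 2 (μ a))
    (hY : ∀ a, MemLp (Y a) 2 (μ a)) (hmean : ∀ a, (μ a)[X a] = (μ a)[Y a])
    (hvar : Tendsto (fun a => Var[fun ω => X a ω - Y a ω; μ a]) l (𝓝 0)) (t : ℝ) :
    Tendsto (fun a => charFun ((μ a).map (X a)) t - charFun ((μ a).map (Y a)) t) l (𝓝 0) := by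
  have hsub (a : α) : MemLp (fun ω => X a ω - Y a ω) 2 (μ a) := (hX a).sub (hY a)
  have hsq (a : α) : ∫ ω, (X a ω - Y a ω) ^ 2 ∂μ a = Var[fun ω => X a ω - Y a ω; μ a] := by
    rw [variance_of_integral_eq_zero (hsub a).aemeasurable]
    rw [integral_sub ((hX a).integrable one_le_two) ((hY a).integrable one_le_two), hmean a,
      sub_self]
  refine squeeze_zero_norm (fun a => (norm_charFun_map_sub_charFun_map_le (hX a).aemeasurable
    (hY a).aemeasurable (hsub a) t).trans_eq (by rw [hsq])) ?_
  simpa using hvar.sqrt.const_mul |t|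

end MeanSquare

section NearlyIndependent

open Asymptotics
open scoped Matrix.Norms.L2Operator

variable {g : ℝ → ℝ}

section FixedSize

variable {ι κ : Type*} [Fintype κ]

theorem mul_transpose_apply_self_le_one {M N : Matrix ι κ ℝ} (hM : ∀ i, M i ⬝ᵥ M i = 1)
    (hN : ∀ i, N i ⬝ᵥ N i = 1) (i : ι) : (M * Nᵀ) i i ≤ 1 :=
  (abs_le.1 ((sq_le_one_iff_abs_le_one (M i ⬝ᵥ N i)).1
    (sub_nonneg.1 (one_sub_dotProduct_sq_nonneg (hM i) (hN i))))).2

theorem memLp_comp_mulVec (hg : MemLp g 2 γ) {M : Matrix ι κ ℝ} {i : ι} (hM : M i ⬝ᵥ M i = 1) :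
    MemLp (fun z => g ((M *ᵥ z) i)) 2 (Measure.pi fun _ : κ => γ) :=
  hg.comp_measurePreserving (measurePreserving_dotProduct_pi_gaussianReal hM)

variable [Fintype ι]

theorem memLp_sum_mul_mulVec (hg : MemLp g 2 γ) {M : Matrix ι κ ℝ} (hM : ∀ i, M i ⬝ᵥ M i = 1)
    (w : ι → ℝ) :
    MemLp (fun z => ∑ i, w i * g ((M *ᵥ z) i)) 2 (Measure.pi fun _ : κ => γ) :=
  memLp_finsetSum _ fun i _ => (memLp_comp_mulVec hg (hM i)).const_mul _

theorem integral_sum_mul_mulVec (hg : MemLp g 2 γ) {M : Matrix ι κ ℝ} (hM : ∀ i, M i ⬝ᵥ M i = 1)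
    (w : ι → ℝ) :
    ∫ z, ∑ i, w i * g ((M *ᵥ z) i) ∂(Measure.pi fun _ : κ => γ) = ∑ i, w i * γ[g] := by
  rw [integral_finsetSum _ fun i _ =>
    ((memLp_comp_mulVec hg (hM i)).integrable one_le_two).const_mul _]
  refine Finset.sum_congr rfl fun i _ => ?_
  rw [integral_const_mul]
  exact congrArg _ (integral_comp_of_measurePreserving
    (measurePreserving_dotProduct_pi_gaussianReal (hM i)) hg.aestronglyMeasurable)

theorem covariance_sum_mul_mulVec (hgm : Measurable g) (hg : MemLp g 2 γ) {M N : Matrix ι κ ℝ}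
    (hM : ∀ i, M i ⬝ᵥ M i = 1) (hN : ∀ i, N i ⬝ᵥ N i = 1) (w : ι → ℝ) :
    cov[fun z => ∑ i, w i * g ((M *ᵥ z) i), fun z => ∑ i, w i * g ((N *ᵥ z) i);
      Measure.pi fun _ : κ => γ] = w ⬝ᵥ (M * Nᵀ).map (gaussianCov g g) *ᵥ w := by
  have hcov (i j : ι) : cov[fun z => g ((M *ᵥ z) i), fun z => g ((N *ᵥ z) j);
      Measure.pi fun _ : κ => γ] = (M * Nᵀ).map (gaussianCov g g) i j :=
    covariance_dotProduct_pi_gaussianReal hgm hgm (hM i) (hN j)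
  rw [covariance_fun_sum_fun_sum (fun i => (memLp_comp_mulVec hg (hM i)).const_mul _)
    fun j => (memLp_comp_mulVec hg (hN j)).const_mul _]
  simp only [covariance_const_mul_left, covariance_const_mul_right, hcov]
  simp only [dotProduct, mulVec, Finset.mul_sum]
  refine Finset.sum_congr rfl fun i _ => Finset.sum_congr rfl fun j _ => ?_
  ring

theorem variance_sum_mul_mulVec_sub (hgm : Measurable g) (hg : MemLp g 2 γ) {M N : Matrix ι κ ℝ}
    (hM : ∀ i, M i ⬝ᵥ M i = 1) (hN : ∀ i, N i ⬝ᵥ N i = 1) (w : ι → ℝ) :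
    Var[fun z => ∑ i, w i * g ((M *ᵥ z) i) - ∑ i, w i * g ((N *ᵥ z) i);
      Measure.pi fun _ : κ => γ] =
      w ⬝ᵥ (M * Mᵀ).map (gaussianCov g g) *ᵥ w - 2 * (w ⬝ᵥ (M * Nᵀ).map (gaussianCov g g) *ᵥ w) +
        w ⬝ᵥ (N * Nᵀ).map (gaussianCov g g) *ᵥ w := by
  have hMm := memLp_sum_mul_mulVec hg hM w
  have hNm := memLp_sum_mul_mulVec hg hN w
  rw [variance_fun_sub hMm hNm, ← covariance_self hMm.aemeasurable,
    ← covariance_self hNm.aemeasurable, covariance_sum_mul_mulVec hgm hg hM hM,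
    covariance_sum_mul_mulVec hgm hg hM hN, covariance_sum_mul_mulVec hgm hg hN hN]

theorem variance_sum_mul_mulVec_sub_le [DecidableEq ι] (hgm : Measurable g) (hg : MemLp g 2 γ)
    {M N : Matrix ι κ ℝ} (hM : ∀ i, M i ⬝ᵥ M i = 1) (hN : ∀ i, N i ⬝ᵥ N i = 1) (w : ι → ℝ) :
    Var[fun z => ∑ i, w i * g ((M *ᵥ z) i) - ∑ i, w i * g ((N *ᵥ z) i);
      Measure.pi fun _ : κ => γ] ≤
      (‖(M * Mᵀ).map (gaussianCov g g) - gaussianCov g g 1 • 1‖ +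
        2 * ‖(M * Nᵀ).map (gaussianCov g g) - gaussianCov g g 1 • 1‖ +
        ‖(N * Nᵀ).map (gaussianCov g g) - gaussianCov g g 1 • 1‖) * ∑ i, w i ^ 2 := by
  have hsplit (L : Matrix ι ι ℝ) : w ⬝ᵥ L *ᵥ w =
      w ⬝ᵥ (L - gaussianCov g g 1 • 1) *ᵥ w + gaussianCov g g 1 * (w ⬝ᵥ w) := by
    simp [sub_mulVec, smul_mulVec, dotProduct_sub]
  have hbound (L : Matrix ι ι ℝ) := abs_le.1 (abs_dotProduct_mulVec_self_le L w)
  rw [variance_sum_mul_mulVec_sub hgm hg hM hN, hsplit (Matrix.map _ _), hsplit (Matrix.map _ _),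
    hsplit (Matrix.map (N * Nᵀ) _)]
  linarith [(hbound ((M * Mᵀ).map (gaussianCov g g) - gaussianCov g g 1 • 1)).2,
    (hbound ((M * Nᵀ).map (gaussianCov g g) - gaussianCov g g 1 • 1)).1,
    (hbound ((N * Nᵀ).map (gaussianCov g g) - gaussianCov g g 1 • 1)).2]

omit [Fintype κ] in
theorem one_row_dotProduct_self [DecidableEq ι] (i : ι) :
    (1 : Matrix ι ι ℝ) i ⬝ᵥ (1 : Matrix ι ι ℝ) i = 1 := by
  simp [dotProduct, Matrix.one_apply]

end FixedSize

variable {α : Type*} {l : Filter α} {ι : α → Type*} [∀ a, Fintype (ι a)] [∀ a, DecidableEq (ι a)]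
  {B : ∀ a, Matrix (ι a) (ι a) ℝ} {w : ∀ a, ι a → ℝ} {c : ℝ}

theorem tendsto_variance_sum_mul_mulVec_sub (hgm : Measurable g) (hg : MemLp g 2 γ)
    (hR1 : ContinuousWithinAt (gaussianCov g g) (Set.Iic 1) 1)
    (hR0 : (fun ρ => gaussianCov g g ρ - c * ρ) =O[𝓝 0] fun ρ => ρ ^ 2)
    (hB : ∀ a i, B a i ⬝ᵥ B a i = 1) (hB1 : Tendsto (fun a => ‖B a - 1‖) l (𝓝 0))
    (hw : IsBoundedUnder (· ≤ ·) l fun a => ∑ i, w a i ^ 2) :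
    Tendsto (fun a => Var[fun z => ∑ i, w a i * g ((B a *ᵥ z) i) - ∑ i, w a i * g (z i);
      Measure.pi fun _ : ι a => γ]) l (𝓝 0) := by
  have hone (a : α) := one_row_dotProduct_self (ι := ι a)
  have hBB : Tendsto (fun a => ‖B a * (B a)ᵀ - 1‖) l (𝓝 0) := by
    refine squeeze_zero (fun _ => norm_nonneg _)
      (fun a => l2_opNorm_mul_transpose_sub_one_le (B a)) ?_
    simpa using (hB1.pow 2).add (hB1.const_mul 2)
  have herr : Tendsto (fun a => ‖(B a * (B a)ᵀ).map (gaussianCov g g) - gaussianCov g g 1 • 1‖ +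
      2 * ‖(B a * 1ᵀ).map (gaussianCov g g) - gaussianCov g g 1 • 1‖ +
      ‖((1 : Matrix (ι a) (ι a) ℝ) * 1ᵀ).map (gaussianCov g g) - gaussianCov g g 1 • 1‖) l
      (𝓝 0) := by
    have hBB' := tendsto_l2_opNorm_map_sub_smul_one hR1 hR0 hBB
      fun a => mul_transpose_apply_self_le_one (hB a) (hB a)
    have hB1' := tendsto_l2_opNorm_map_sub_smul_one (N := fun a => B a * 1ᵀ) hR1 hR0
      (by simpa using hB1) fun a => mul_transpose_apply_self_le_one (hB a) (hone a)
    have h11' := tendsto_l2_opNorm_map_sub_smul_one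
      (N := fun a => (1 : Matrix (ι a) (ι a) ℝ) * 1ᵀ) (l := l) hR1 hR0
      (by simpa using tendsto_const_nhds) fun a => mul_transpose_apply_self_le_one (hone a) (hone a)
    simpa using (hBB'.add (hB1'.const_mul 2)).add h11'
  have hw' : IsBoundedUnder (· ≤ ·) l fun a => ‖∑ i, w a i ^ 2‖ := by
    simpa only [Real.norm_of_nonneg (Finset.sum_nonneg fun _ _ => sq_nonneg _)] using hw
  refine squeeze_zero (fun _ => variance_nonneg _ _) (fun a => ?_)
    (herr.zero_mul_isBoundedUnder_le hw')
  simpa only [one_mulVec] using variance_sum_mul_mulVec_sub_le hgm hg (hB a) (hone a) (w a)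

theorem tendsto_charFun_map_sum_mul_mulVec (hgm : Measurable g) (hg : MemLp g 2 γ)
    (hvar : 0 < Var[g; γ]) (hR1 : ContinuousWithinAt (gaussianCov g g) (Set.Iic 1) 1)
    (hR0 : (fun ρ => gaussianCov g g ρ - c * ρ) =O[𝓝 0] fun ρ => ρ ^ 2)
    (hB : ∀ a i, B a i ⬝ᵥ B a i = 1) (hB1 : Tendsto (fun a => ‖B a - 1‖) l (𝓝 0))
    (hw : Tendsto (fun a => ‖w a‖) l (𝓝 0)) {σ2 : ℝ≥0}
    (hσ : Tendsto (fun a => Var[g; γ] * ∑ i, w a i ^ 2) l (𝓝 σ2)) (t : ℝ) :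
    Tendsto (fun a => charFun ((Measure.pi fun _ : ι a => γ).map
      fun z => ∑ i, w a i * (g ((B a *ᵥ z) i) - γ[g])) t) l
      (𝓝 (charFun (gaussianReal 0 σ2) t)) := by
  set m : ℝ := γ[g]
  have hgc : MemLp (fun x => g x - m) 2 γ := hg.sub (memLp_const m)
  have hvarc : Var[fun x => g x - m; γ] = Var[g; γ] := variance_sub_const hg.1 m
  have hmeanc : ∫ x, (g x - m) ∂γ = 0 := by
    rw [integral_sub (hg.integrable one_le_two) (integrable_const m), integral_const,
      probReal_univ, one_smul, sub_self]
  have hiid := tendsto_charFun_map_sum_mul_pi hgc hmeanc (hvarc ▸ hvar) hw (hvarc ▸ hσ) t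
  have hbdd : IsBoundedUnder (· ≤ ·) l fun a => ∑ i, w a i ^ 2 :=
    isBoundedUnder_le_of_tendsto_const_mul hvar.ne' hσ
  have hdiff := tendsto_charFun_map_sub_charFun_map_of_variance
    (X := fun a z => ∑ i, w a i * (g ((B a *ᵥ z) i) - m))
    (Y := fun a z => ∑ i, w a i * (g (z i) - m)) (μ := fun a => Measure.pi fun _ : ι a => γ)
    (fun a => memLp_sum_mul_mulVec hgc (hB a) (w a))
    (fun a => by simpa using memLp_sum_mul_mulVec hgc one_row_dotProduct_self (w a))
    (fun a => (integral_sum_mul_mulVec hgc (hB a) (w a)).trans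
      (by simpa using (integral_sum_mul_mulVec hgc one_row_dotProduct_self (w a)).symm))
    (by simpa only [mul_sub, Finset.sum_sub_distrib, sub_sub_sub_cancel_right] using
      tendsto_variance_sum_mul_mulVec_sub hgm hg hR1 hR0 hB hB1 hbdd) t
  simpa using hdiff.add hiid

theorem tendstoInDistribution_sum_mul_mulVec {ι : ℕ → Type*} [∀ n, Fintype (ι n)]
    [∀ n, DecidableEq (ι n)] {B : ∀ n, Matrix (ι n) (ι n) ℝ} {w : ∀ n, ι n → ℝ}
    (hgm : Measurable g) (hg : MemLp g 2 γ)
    (hvar : 0 < Var[g; γ]) (hR1 : ContinuousWithinAt (gaussianCov g g) (Set.Iic 1) 1)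
    (hR0 : (fun ρ => gaussianCov g g ρ - c * ρ) =O[𝓝 0] fun ρ => ρ ^ 2)
    (hB : ∀ n i, B n i ⬝ᵥ B n i = 1) (hB1 : Tendsto (fun n => ‖B n - 1‖) atTop (𝓝 0))
    (hw : Tendsto (fun n => ‖w n‖) atTop (𝓝 0)) {σ2 : ℝ≥0}
    (hσ : Tendsto (fun n => Var[g; γ] * ∑ i, w n i ^ 2) atTop (𝓝 σ2)) :
    TendstoInDistribution (fun n z => ∑ i, w n i * (g ((B n *ᵥ z) i) - γ[g])) atTop (id : ℝ → ℝ)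
      (fun n => Measure.pi fun _ : ι n => γ) (gaussianReal 0 σ2) where
  forall_aemeasurable n := by fun_prop
  tendsto := ProbabilityMeasure.tendsto_iff_tendsto_charFun.2 fun t => by
    simpa using tendsto_charFun_map_sum_mul_mulVec hgm hg hvar hR1 hR0 hB hB1 hw hσ t

end NearlyIndependent

section Perturbation

open scoped Matrix.Norms.L2Operator

variable {α : Type*} {l : Filter α} {ι : α → Type*} [∀ a, Fintype (ι a)]

theorem tendsto_norm_of_tendsto_sum_sq_sub {x y : ∀ a, ι a → ℝ}
    (hxy : Tendsto (fun a => ∑ i, (x a i - y a i) ^ 2) l (𝓝 0))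
    (hx : Tendsto (fun a => ‖x a‖) l (𝓝 0)) : Tendsto (fun a => ‖y a‖) l (𝓝 0) := by
  refine squeeze_zero (fun _ => norm_nonneg _) (fun a => ?_)
    (by simpa only [Real.sqrt_zero, add_zero] using hx.add hxy.sqrt)
  refine (norm_le_norm_add_norm_sub (x a) (y a)).trans ?_
  gcongr
  refine (pi_norm_le_iff_of_nonneg (Real.sqrt_nonneg _)).2 fun i => Real.abs_le_sqrt ?_
  exact Finset.single_le_sum (f := fun i => (x a i - y a i) ^ 2) (fun _ _ => sq_nonneg _)
    (Finset.mem_univ i)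

theorem tendsto_mul_sum_sq_of_tendsto_sum_sq_sub [l.NeBot] {x y : ∀ a, ι a → ℝ} {c s : ℝ}
    (hc : c ≠ 0) (hxy : Tendsto (fun a => ∑ i, (x a i - y a i) ^ 2) l (𝓝 0))
    (hcx : Tendsto (fun a => c * ∑ i, x a i ^ 2) l (𝓝 s)) :
    Tendsto (fun a => c * ∑ i, y a i ^ 2) l (𝓝 s) := by
  have hx : Tendsto (fun a => ∑ i, x a i ^ 2) l (𝓝 (c⁻¹ * s)) := by
    simpa only [inv_mul_cancel_left₀ hc] using hcx.const_mul c⁻¹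
  have hnorm (z : ∀ a, ι a → ℝ) (a : α) : √(∑ i, z a i ^ 2) = ‖WithLp.toLp 2 (z a)‖ := by
    rw [EuclideanSpace.norm_eq]
    simp only [Real.norm_eq_abs, sq_abs]
  have hdiff : Tendsto (fun a => √(∑ i, y a i ^ 2) - √(∑ i, x a i ^ 2)) l (𝓝 0) := by
    refine squeeze_zero_norm (fun a => ?_) (by simpa only [Real.sqrt_zero] using hxy.sqrt)
    rw [hnorm, hnorm, hnorm (fun a i => x a i - y a i), norm_sub_rev]
    exact abs_norm_sub_norm_le _ _
  have hlim := (hdiff.add hx.sqrt).pow 2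
  simp only [sub_add_cancel, zero_add] at hlim
  rw [Real.sq_sqrt (ge_of_tendsto' hx fun a => by positivity)] at hlim
  simpa only [mul_inv_cancel_left₀ hc] using
    (hlim.congr fun a => Real.sq_sqrt (by positivity)).const_mul c

variable [∀ a, DecidableEq (ι a)] {Q : ∀ a, Matrix (ι a) (ι a) ℝ} {x : ∀ a, ι a → ℝ} {v C : ℝ}

theorem tendsto_sum_sq_inv_smul_mulVec_sub (hQ : ∀ a, (Q a).PosSemidef) (hv : 0 < v)
    (hQv : Tendsto (fun a => ‖Q a * Q a - v ^ 2 • 1‖) l (𝓝 0))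
    (hx : ∀ a, ∑ i, x a i ^ 2 ≤ C) :
    Tendsto (fun a => ∑ i, ((v⁻¹ • (Q a *ᵥ x a)) i - x a i) ^ 2) l (𝓝 0) := by
  have hbound : Tendsto
      (fun a => (v⁻¹ * (v⁻¹ * ‖Q a * Q a - v ^ 2 • 1‖)) ^ 2 * C) l (𝓝 0) := by
    simpa using (((hQv.const_mul v⁻¹).const_mul v⁻¹).pow 2).mul_const C
  refine squeeze_zero (fun a => by positivity) (fun a => ?_) hbound
  have hsub : v⁻¹ • (Q a *ᵥ x a) - x a = (v⁻¹ • (Q a - v • 1)) *ᵥ x a := by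
    rw [smul_sub, inv_smul_smul₀ hv.ne', sub_mulVec, one_mulVec, smul_mulVec]
  calc ∑ i, ((v⁻¹ • (Q a *ᵥ x a)) i - x a i) ^ 2
      ≤ ‖v⁻¹ • (Q a - v • 1)‖ ^ 2 * ∑ i, x a i ^ 2 := by
        simp only [← Pi.sub_apply, hsub]
        exact sum_sq_mulVec_le _ _
    _ ≤ _ := by
        rw [norm_smul, Real.norm_of_nonneg (inv_nonneg.2 hv.le)]
        gcongr
        exacts [l2_opNorm_sub_smul_one_le_of_posSemidef (hQ a) hv, hx a]

end Perturbation

section PGDLimit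

open scoped Matrix.Norms.L2Operator

variable {d : ℕ → ℕ} {X : ∀ n : ℕ, Matrix (Fin n) (Fin (d n)) ℝ} {η : ℕ → ℝ}

theorem tendsto_l2_opNorm_rowNormalize_gradStep_sub_one (hX : ∀ n i, ∑ j, X n i j ^ 2 = 1)
    (hη : ∀ n, 0 ≤ η n)
    (hηop : Tendsto (fun n => η n * opNorm (X n * (X n)ᵀ - 1)) atTop (𝓝 0)) (c : ℝ) :
    Tendsto (fun n => ‖rowNormalize (gradStep (X n) (η n) c) - 1‖) atTop (𝓝 0) := by
  refine squeeze_zero (fun _ => norm_nonneg _) (fun n => ?_)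
    (by simpa only [mul_zero] using hηop.const_mul (2 * |c|))
  refine (l2_opNorm_rowNormalize_sub_one_le (gradStep_apply_self (hX n))).trans_eq ?_
  rw [l2_opNorm_gradStep_sub_one, abs_mul, abs_of_nonneg (hη n)]
  ring

theorem tendsto_l2_opNorm_map_pgd_sub_smul_one {f : ℝ → ℝ} {c : ℝ}
    (hX : ∀ n i, ∑ j, X n i j ^ 2 = 1) (hη : ∀ n, 0 ≤ η n)
    (hηop : Tendsto (fun n => η n * opNorm (X n * (X n)ᵀ - 1)) atTop (𝓝 0))
    (hf1 : ContinuousWithinAt f (Set.Iic 1) 1)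
    (hf0 : (fun s => f s - c * s) =O[𝓝 0] fun s => s ^ 2) :
    Tendsto (fun n => ‖(pgd (X n) (η n) c).map f - f 1 • 1‖) atTop (𝓝 0) := by
  have hB := tendsto_l2_opNorm_rowNormalize_gradStep_sub_one hX hη hηop c
  refine tendsto_l2_opNorm_map_sub_smul_one hf1 hf0 ?_ fun n i => ?_
  · refine squeeze_zero (fun _ => norm_nonneg _) (fun n => ?_)
      (by simpa using (hB.pow 2).add (hB.const_mul 2))
    rw [pgd_eq_mul_transpose]
    exact l2_opNorm_mul_transpose_sub_one_le _
  · rw [pgd_eq_mul_transpose]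
    exact (dotProduct_rowNormalize_self (gradStep_apply_self (hX n)) i).le

end PGDLimit

section ArmEstimator

open scoped Matrix.Norms.L2Operator

variable {K : ℕ} {k : Fin K} {q : ℕ → ℝ}

theorem fkfun_one_mul_sum_sq_smul (hK : 2 ≤ K)
    (hq : ∀ m : ℕ, 0 < m → m < K → stdGaussianCDF (q m) = (m : ℝ) / K) {n : ℕ} (y : Fin n → ℝ) :
    fkfun q K k 1 * ∑ i, (((K : ℝ) / √n) • y) i ^ 2 = ((K : ℝ) - 1) / n * ∑ i, y i ^ 2 := by
  have hK0 : (K : ℝ) ≠ 0 := by positivity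
  simp only [Pi.smul_apply, smul_eq_mul, mul_pow, div_pow, Real.sq_sqrt (Nat.cast_nonneg n),
    ← Finset.mul_sum]
  rw [fkfun_one hK hq, ← mul_assoc]
  congr 1
  field_simp

theorem tendsto_norm_div_sqrt_smul {y : ∀ n : ℕ, Fin n → ℝ}
    (hy : ∀ ε > (0 : ℝ), ∀ᶠ n in atTop, ∀ i, y n i ^ 2 / n < ε) (c : ℝ) :
    Tendsto (fun n : ℕ => ‖(c / √n) • y n‖) atTop (𝓝 0) := by
  have hnorm : Tendsto (fun n : ℕ => ‖(√n)⁻¹ • y n‖) atTop (𝓝 0) := by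
    refine Metric.tendsto_nhds.2 fun ε hε => ?_
    filter_upwards [hy (ε ^ 2) (by positivity)] with n hn
    rw [dist_zero_right, norm_norm, pi_norm_lt_iff hε]
    intro i
    refine abs_lt_of_sq_lt_sq ?_ hε.le
    rw [Pi.smul_apply, smul_eq_mul, mul_pow, inv_pow, Real.sq_sqrt (Nat.cast_nonneg n),
      inv_mul_eq_div]
    exact hn i
  simpa only [div_eq_mul_inv, mul_smul, norm_smul c, mul_zero] using hnorm.const_mul ‖c‖

theorem tendsto_sum_sq_div_sqrt_smul_sub (hK : 2 ≤ K)
    (hq : ∀ m : ℕ, 0 < m → m < K → stdGaussianCDF (q m) = (m : ℝ) / K)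
    {Q : ∀ n : ℕ, Matrix (Fin n) (Fin n) ℝ} {y y' : ∀ n : ℕ, Fin n → ℝ} {M : ℝ}
    (hQ : ∀ n, (Q n).PosSemidef)
    (hQv : Tendsto (fun n => ‖Q n * Q n - fkfun q K k 1 • 1‖) atTop (𝓝 0))
    (hy' : ∀ n, y' n = ((K : ℝ) / √((K : ℝ) - 1)) • (Q n *ᵥ y n))
    (hy : ∀ n, ∑ i, y n i ^ 2 ≤ n * M) :
    Tendsto (fun n : ℕ => ∑ i, ((((K : ℝ) / √n) • y' n) i - (((K : ℝ) / √n) • y n) i) ^ 2) atTop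
      (𝓝 0) := by
  have hK1 : (0 : ℝ) < (K : ℝ) - 1 := sub_pos.2 (by exact_mod_cast hK)
  have hK0 : (0 : ℝ) < K := by positivity
  have hv : fkfun q K k 1 = (√((K : ℝ) - 1) / K) ^ 2 := by
    rw [fkfun_one hK hq, div_pow, Real.sq_sqrt hK1.le]
  have hbound (n : ℕ) : ∑ i, (((K : ℝ) / √n) • y n) i ^ 2 ≤ (K : ℝ) ^ 2 * |M| := by
    simp only [Pi.smul_apply, smul_eq_mul, mul_pow, div_pow, Real.sq_sqrt (Nat.cast_nonneg n),
      ← Finset.mul_sum, div_mul_eq_mul_div, mul_div_assoc]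
    rw [← Finset.sum_div]
    refine mul_le_mul_of_nonneg_left (div_le_of_le_mul₀ n.cast_nonneg (abs_nonneg M) ?_)
      (sq_nonneg _)
    rw [mul_comm]
    exact (hy n).trans (mul_le_mul_of_nonneg_left (le_abs_self M) n.cast_nonneg)
  rw [hv] at hQv
  have hlim := tendsto_sum_sq_inv_smul_mulVec_sub hQ (by positivity) hQv hbound
  refine hlim.congr fun n => ?_
  rw [hy', mulVec_smul, inv_div, smul_comm]

theorem tendstoInDistribution_sum_mul_indicator_armSet (hK : 2 ≤ K)
    (hq : ∀ m : ℕ, 0 < m → m < K → stdGaussianCDF (q m) = (m : ℝ) / K)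
    {ι : ℕ → Type*} [∀ n, Fintype (ι n)] [∀ n, DecidableEq (ι n)]
    {B : ∀ n, Matrix (ι n) (ι n) ℝ} {w : ∀ n, ι n → ℝ} (hB : ∀ n i, B n i ⬝ᵥ B n i = 1)
    (hB1 : Tendsto (fun n => ‖B n - 1‖) atTop (𝓝 0))
    (hw : Tendsto (fun n => ‖w n‖) atTop (𝓝 0)) {σ2 : ℝ≥0}
    (hσ : Tendsto (fun n => fkfun q K k 1 * ∑ i, w n i ^ 2) atTop (𝓝 σ2)) :
    TendstoInDistribution
      (fun n z => ∑ i, w n i * ((armSet q K k).indicator 1 ((B n *ᵥ z) i) - 1 / K)) atTop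
      (id : ℝ → ℝ) (fun n => Measure.pi fun _ : ι n => γ) (gaussianReal 0 σ2) := by
  set g : ℝ → ℝ := (armSet q K k).indicator 1 with hg
  have hgm : Measurable g := measurable_one.indicator measurableSet_armSet
  have hcov {ρ : ℝ} (hρ : ρ ∈ Set.Ioc (-1 : ℝ) 1) : gaussianCov g g ρ = fkfun q K k ρ :=
    gaussianCov_indicator_armSet hq hρ
  have hvar : Var[g; γ] = fkfun q K k 1 := by
    rw [← gaussianCov_one hgm, hcov (by norm_num)]
  have hmean : γ[g] = (1 : ℝ) / K := by
    rw [hg, integral_indicator_one measurableSet_armSet, gaussianReal_real_armSet hK hq]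
  rw [← hvar] at hσ
  rw [← hmean]
  refine tendstoInDistribution_sum_mul_mulVec (c := deriv (fkfun q K k) 0) hgm
    (memLp_indicator_const 2 measurableSet_armSet 1 (Or.inr (measure_ne_top _ _)))
    ?_ ?_ ?_ hB hB1 hw hσ
  · rw [hvar]
    exact fkfun_one_pos hK hq
  · refine continuousWithinAt_fkfun_one.congr_of_eventuallyEq ?_ (hcov (by norm_num))
    filter_upwards [inter_mem_nhdsWithin _ (Ioi_mem_nhds (by norm_num : (-1 : ℝ) < 1))] with ρ hρ
      using hcov ⟨hρ.2, hρ.1⟩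
  · refine (isBigO_fkfun_sub_deriv_mul (k := k) (q := q)).congr' ?_ .rfl
    filter_upwards [Ioo_mem_nhds (by norm_num : (-1 : ℝ) < 0) one_pos] with ρ hρ
    rw [hcov ⟨hρ.1, hρ.2.le⟩]

theorem tendsto_integral_of_tendstoInDistribution {α E Ω' : Type*} {Ω : α → Type*}
    [TopologicalSpace E] [MeasurableSpace E] [OpensMeasurableSpace E]
    [∀ a, MeasurableSpace (Ω a)] [MeasurableSpace Ω'] {μ : ∀ a, Measure (Ω a)}
    [∀ a, IsProbabilityMeasure (μ a)] {ν : Measure Ω'} [IsProbabilityMeasure ν] {l : Filter α}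
    {S : ∀ a, Ω a → E} {Z : Ω' → E} (h : TendstoInDistribution S l Z μ ν)
    (f : BoundedContinuousFunction E ℝ) :
    Tendsto (fun a => ∫ ω, f (S a ω) ∂μ a) l (𝓝 (∫ ω, f (Z ω) ∂ν)) := by
  have hlim := ProbabilityMeasure.tendsto_iff_forall_integral_tendsto.1 h.tendsto f
  simpa only [ProbabilityMeasure.coe_mk, integral_map h.aemeasurable_limit
    f.continuous.measurable.aestronglyMeasurable, integral_map (h.forall_aemeasurable _)
    f.continuous.measurable.aestronglyMeasurable] using hlim

theorem sqrt_mul_sub_eq_sum_mul_indicator_sub {n : ℕ} (hK : K ≠ 0) {s : Set ℝ} {D : Fin n → Fin K}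
    {t : Fin n → ℝ} (hD : ∀ i, D i = k ↔ t i ∈ s) (y : Fin n → ℝ) :
    √n * ((K : ℝ) / n * ∑ i, (if D i = k then y i else 0) - (1 : ℝ) / n * ∑ i, y i) =
      ∑ i, ((K : ℝ) / √n) • y i * (s.indicator 1 (t i) - 1 / K) := by
  classical
  have hterm (i : Fin n) : ((K : ℝ) / √n) • y i * (s.indicator 1 (t i) - 1 / K) =
      (√n)⁻¹ * (K * (if D i = k then y i else 0) - y i) := by
    rw [Set.indicator_apply, Pi.one_apply, ite_cond_congr (propext (hD i)), smul_eq_mul]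
    split_ifs
    · field_simp
    · field_simp
      ring
  rw [Finset.sum_congr rfl fun i _ => hterm i, ← Finset.mul_sum, Finset.sum_sub_distrib,
    ← Finset.mul_sum, ← one_div, ← Real.sqrt_div_self']
  ring

end ArmEstimator

/-- **Asymptotic normality under one-step PGD-Gauss.**
Under unit-norm covariate rows, `η_n ‖XXᵀ − I‖_op → 0`, `T⁽ⁿ⁾ ~ N(0, Σ_{η_n})` (expressed as
the pushforward of an i.i.d. standard Gaussian vector by any `A` with `A Aᵀ = Σ_{η_n}`),
`D_i = g(T_i)`, and with `Ỹ(k) = f_k(I)^{−1/2} f_k(Σ_{η_n})^{1/2} Y(k)` (the square root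
`Q_n = f_k(Σ_{η_n})^{1/2}` being characterized as the unique positive semidefinite `Q` with
`Q² = f_k(Σ_{η_n})`, and `f_k(I)^{−1/2} = (K/√(K−1)) I`), if
(1) `max_i Ỹ_i(k)²/n → 0`, (2) `((K−1)/n) ‖Ỹ(k)‖² → σ² > 0`, (3) `‖Y⁽ⁿ⁾(k)‖² ≤ nM`,
then `√n (τ̂_k − τ_k)` converges in distribution to `N(0, σ²)` (weak convergence expressed
via bounded continuous test functions). -/
theorem asymptotic_normality_one_step_pgd
    (K : ℕ) (hK : 2 ≤ K) (k : Fin K)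
    (q : ℕ → ℝ) (hq : ∀ m : ℕ, 0 < m → m < K → stdGaussianCDF (q m) = (m : ℝ) / K)
    (Ω : ℕ → Type) [∀ nn, MeasureSpace (Ω nn)]
    [∀ nn, IsProbabilityMeasure (volume : Measure (Ω nn))]
    (d : ℕ → ℕ) (X : ∀ nn : ℕ, Matrix (Fin nn) (Fin (d nn)) ℝ)
    (hX : ∀ nn (i : Fin nn), ∑ j, X nn i j ^ 2 = 1)
    (Y : ∀ nn : ℕ, Fin nn → ℝ)
    (η : ℕ → ℝ) (hη : ∀ nn, 0 < η nn)
    (hηop : Tendsto (fun nn => η nn * opNorm (X nn * (X nn)ᵀ - 1)) atTop (𝓝 0))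
    (A : ∀ nn : ℕ, Matrix (Fin nn) (Fin nn) ℝ)
    (hA : ∀ nn, A nn * (A nn)ᵀ = pgd (X nn) (η nn) (deriv (fkfun q K k) 0))
    (T : ∀ nn : ℕ, Ω nn → Fin nn → ℝ) (hTmeas : ∀ nn, Measurable (T nn))
    (hTlaw : ∀ nn, Measure.map (T nn) volume =
      Measure.map (fun z => A nn *ᵥ z) (Measure.pi fun _ : Fin nn => gaussianReal 0 1))
    (D : ∀ nn : ℕ, Ω nn → Fin nn → Fin K)
    (hD : ∀ nn ω i (kk : Fin K), D nn ω i = kk ↔ T nn ω i ∈ armSet q K kk)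
    (Q : ∀ nn : ℕ, Matrix (Fin nn) (Fin nn) ℝ)
    (hQpsd : ∀ nn, (Q nn).PosSemidef)
    (hQsq : ∀ nn, Q nn * Q nn = Matrix.of fun i j =>
      fkfun q K k (pgd (X nn) (η nn) (deriv (fkfun q K k) 0) i j))
    (Ytil : ∀ nn : ℕ, Fin nn → ℝ)
    (hYtil : ∀ nn, Ytil nn = ((K : ℝ) / Real.sqrt ((K : ℝ) - 1)) • (Q nn *ᵥ Y nn))
    (σ2 : ℝ≥0) (hσ2 : 0 < σ2)
    (h1 : ∀ ε > (0 : ℝ), ∀ᶠ nn in atTop, ∀ i : Fin nn, Ytil nn i ^ 2 / nn < ε)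
    (h2 : Tendsto (fun nn => ((K : ℝ) - 1) / nn * ∑ i, Ytil nn i ^ 2) atTop (𝓝 (σ2 : ℝ)))
    (M : ℝ) (hM : 0 < M) (h3 : ∀ nn, ∑ i, Y nn i ^ 2 ≤ nn * M) :
    ∀ f : BoundedContinuousFunction ℝ ℝ,
      Tendsto
        (fun nn : ℕ => ∫ ω, f (Real.sqrt (nn : ℝ) *
          ((K : ℝ) / (nn : ℝ) * ∑ i, (if D nn ω i = k then Y nn i else 0) -
            (1 : ℝ) / (nn : ℝ) * ∑ i, Y nn i)))
        atTop (𝓝 (∫ x, f x ∂(gaussianReal 0 σ2))) := by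
  set c := deriv (fkfun q K k) 0
  intro f
  set B := fun n => rowNormalize (gradStep (X n) (η n) c)
  set w : ∀ n, Fin n → ℝ := fun n => ((K : ℝ) / √n) • Y n
  have hB1 := tendsto_l2_opNorm_rowNormalize_gradStep_sub_one hX (fun n => (hη n).le) hηop c
  have hQ1 := tendsto_l2_opNorm_map_pgd_sub_smul_one hX (fun n => (hη n).le) hηop
    (continuousWithinAt_fkfun_one (k := k) (q := q)) isBigO_fkfun_sub_deriv_mul
  have hYw := tendsto_sum_sq_div_sqrt_smul_sub hK hq hQpsd
    (hQ1.congr fun n => by rw [hQsq]; rfl) hYtil h3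
  have hw : Tendsto (fun n => ‖w n‖) atTop (𝓝 0) :=
    tendsto_norm_of_tendsto_sum_sq_sub hYw (tendsto_norm_div_sqrt_smul h1 K)
  have hσ : Tendsto (fun n => fkfun q K k 1 * ∑ i, w n i ^ 2) atTop (𝓝 σ2) :=
    tendsto_mul_sum_sq_of_tendsto_sum_sq_sub (fkfun_one_pos hK hq).ne' hYw
      (h2.congr fun n => (fkfun_one_mul_sum_sq_smul hK hq (Ytil n)).symm)
  have hclt := tendstoInDistribution_sum_mul_indicator_armSet hK hq
    (fun n => dotProduct_rowNormalize_self (gradStep_apply_self (hX n))) hB1 hw hσ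
  refine (tendsto_integral_of_tendstoInDistribution hclt f).congr fun n => ?_
  have hT : IdentDistrib (T n) (B n *ᵥ ·) volume _ :=
    identDistrib_mulVec_pi_gaussianReal (hTmeas n) (hTlaw n) ((hA n).trans pgd_eq_mul_transpose)
  have hF : Measurable fun t : Fin n → ℝ =>
      f (∑ i, w n i * ((armSet q K k).indicator 1 (t i) - 1 / K)) :=
    f.continuous.measurable.comp (by fun_prop (disch := exact measurableSet_armSet))
  refine (hT.comp hF).integral_eq.symm.trans (integral_congr_ae (ae_of_all _ fun ω => ?_))
  exact congrArg f (sqrt_mul_sub_eq_sum_mul_indicator_sub (by lia) (hD n ω · k) (Y n)).symm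

end
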